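/- arXiv:1406.3464 — 2 statements merged into one kernel-verified Lean document; each statement's English description precedes it below -/
import Mathlib

section
/- Let G be a finite minimal nonsupersoluble group. Then the supersoluble residual G^𝔘 is the unique normal Sylow subgroup of G; that is, G^𝔘 is a Sylow p-subgroup of G for some prime p, it is normal in G, and every normal Sylow subgroup of G equals G^𝔘. -/
open Subgroup

/-- A finite group is supersoluble if it has a normal series, all of whose terms are
normal in the whole group, with cyclic factors. -/
def IsSupersoluble (G : Type*) [Group G] : Prop :=
  ∃ (n : ℕ) (c : Fin (n + 1) → Subgroup G) (hc : ∀ i, (c i).Normal),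
    c 0 = ⊥ ∧ c (Fin.last n) = ⊤ ∧
    ∀ i : Fin n, c i.castSucc ≤ c i.succ ∧
      haveI := (hc i.castSucc).subgroupOf (c i.succ)
      IsCyclic (↥(c i.succ) ⧸ ((c i.castSucc).subgroupOf (c i.succ)))

/-- `H` is a maximal subgroup of `K`, where `H ≤ K` are subgroups of a common group. -/
def IsMaximalIn {G : Type*} [Group G] (H K : Subgroup G) : Prop :=
  H ≤ K ∧ IsCoatom (H.subgroupOf K)

/-- The `n`-maximal subgroups of `G`: `0`-maximal is `G` itself, and an `(n+1)`-maximal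
subgroup is a maximal subgroup of some `n`-maximal subgroup. -/
def IsNMaximal {G : Type*} [Group G] : ℕ → Subgroup G → Prop
  | 0, H => H = ⊤
  | n + 1, H => ∃ K : Subgroup G, IsNMaximal n K ∧ IsMaximalIn H K

/-- `H` is `K`-`𝔘`-subnormal in `K`: there is a chain of subgroups
`H = H₀ ≤ H₁ ≤ ⋯ ≤ Hₜ = K` such that at each step either `H_{i-1}` is normal in `H_i`
or `H_i` modulo the core of `H_{i-1}` in `H_i` is supersoluble. -/
def IsKUSubnormalIn {G : Type*} [Group G] (H K : Subgroup G) : Prop :=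
  ∃ (n : ℕ) (c : Fin (n + 1) → Subgroup G),
    c 0 = H ∧ c (Fin.last n) = K ∧
    ∀ i : Fin n, c i.castSucc ≤ c i.succ ∧
      (((c i.castSucc).subgroupOf (c i.succ)).Normal ∨
        IsSupersoluble (↥(c i.succ) ⧸ ((c i.castSucc).subgroupOf (c i.succ)).normalCore))

/-- `H` is `K`-`𝔘`-subnormal in `G`. -/
def IsKUSubnormal {G : Type*} [Group G] (H : Subgroup G) : Prop :=
  IsKUSubnormalIn H ⊤

/-- `H` is `𝔘`-subnormal in `G`: there is a chain of subgroups
`H = H₀ ≤ H₁ ≤ ⋯ ≤ Hₙ = G` with `H_i` modulo the core of `H_{i-1}` in `H_i`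
supersoluble at each step. -/
def IsUSubnormal {G : Type*} [Group G] (H : Subgroup G) : Prop :=
  ∃ (n : ℕ) (c : Fin (n + 1) → Subgroup G),
    c 0 = H ∧ c (Fin.last n) = ⊤ ∧
    ∀ i : Fin n, c i.castSucc ≤ c i.succ ∧
      IsSupersoluble (↥(c i.succ) ⧸ ((c i.castSucc).subgroupOf (c i.succ)).normalCore)

/-- The supersoluble residual `G^𝔘` of `G`: the intersection of all normal subgroups `N`
of `G` with `G/N` supersoluble. -/
def ssResidual (G : Type*) [Group G] : Subgroup G :=
  ⨅ N ∈ {N : Subgroup G | ∃ hN : N.Normal, haveI := hN; IsSupersoluble (G ⧸ N)}, N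

/-- `N` is a minimal normal subgroup of `G`. -/
def IsMinimalNormal {G : Type*} [Group G] (N : Subgroup G) : Prop :=
  N.Normal ∧ N ≠ ⊥ ∧ ∀ M : Subgroup G, M.Normal → M ≤ N → M ≠ ⊥ → M = N

/-- `G` is minimal nonsupersoluble: not supersoluble, but all proper subgroups are. -/
def IsMinimalNonsupersoluble (G : Type*) [Group G] : Prop :=
  ¬ IsSupersoluble G ∧ ∀ H : Subgroup G, H ≠ ⊤ → IsSupersoluble H

/-- `G` is an `SDH`-group: minimal nonsupersoluble with `G^𝔘` a minimal normal subgroup. -/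
def IsSDH (G : Type*) [Group G] : Prop :=
  IsMinimalNonsupersoluble G ∧ IsMinimalNormal (ssResidual G)

/-- `H` is a Sylow `p`-subgroup of its ambient (finite) group. -/
def IsSylowSubgroup {G : Type*} [Group G] (p : ℕ) (H : Subgroup G) : Prop :=
  IsPGroup p H ∧ ¬ p ∣ H.index

/-- A finite group is Ore dispersive if, enumerating the prime divisors of `|G|`
in decreasing order as `p₁ > p₂ > ⋯ > pₙ`, for every `i` it has a normal subgroup of
order `p₁^{a₁} ⋯ p_i^{a_i}`. -/
def OreDispersive (G : Type*) [Group G] : Prop :=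
  ∀ p : ℕ, p.Prime → ∃ N : Subgroup G, N.Normal ∧
    Nat.card N =
      ∏ q ∈ (Nat.card G).primeFactors.filter (fun q => p ≤ q),
        q ^ (Nat.card G).factorization q

/-- `A/B` is a chief factor of `G`. -/
def IsChiefFactor {G : Type*} [Group G] (A B : Subgroup G) : Prop :=
  A.Normal ∧ B ≤ A ∧ ∃ hB : B.Normal,
    haveI := hB
    IsMinimalNormal (A.map (QuotientGroup.mk' B))

/-- The subgroups `H` and `K` of `G` are conjugate in `G`. -/
def ConjSubgroup {G : Type*} [Group G] (H K : Subgroup G) : Prop :=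
  ∃ g : G, K = H.map (MulAut.conj g).toMonoidHom

/-- The Frattini subgroup of a subgroup `H` of `G`, as a subgroup of `G`. -/
def frattiniIn {G : Type*} [Group G] (H : Subgroup G) : Subgroup G :=
  (frattini H).map H.subtype

/-- `G = P ⋊ (Q ⋊ R)` as an internal statement about subgroups `P`, `Q`, `R` of `G`. -/
def IsInternalSemidirect3 {G : Type*} [Group G] (P Q R : Subgroup G) : Prop :=
  P.Normal ∧ P ⊓ (Q ⊔ R) = ⊥ ∧ P ⊔ Q ⊔ R = ⊤ ∧
    (Q.subgroupOf (Q ⊔ R)).Normal ∧ Q ⊓ R = ⊥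

/-- `G = P ⋊ (Q ⋊ (R ⋊ T))` as an internal statement about subgroups of `G`. -/
def IsInternalSemidirect4 {G : Type*} [Group G] (P Q R T : Subgroup G) : Prop :=
  P.Normal ∧ P ⊓ (Q ⊔ R ⊔ T) = ⊥ ∧ P ⊔ Q ⊔ R ⊔ T = ⊤ ∧
    (Q.subgroupOf (Q ⊔ R ⊔ T)).Normal ∧ Q ⊓ (R ⊔ T) = ⊥ ∧
    (R.subgroupOf (R ⊔ T)).Normal ∧ R ⊓ T = ⊥

namespace MNS

def Good {G : Type*} [Group G] (N L : Subgroup G) : Prop :=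
  ∃ M : Subgroup G, M.Normal ∧ N ≤ M ∧ M ≤ L ∧ (N.relIndex M).Prime

def SSA {G : Type*} [Group G] (A : Subgroup G) : Prop :=
  ∀ N L : Subgroup G, N.Normal → L.Normal → A ≤ N → N < L → Good N L

theorem ssa_hom {G H : Type*} [Group G] [Group H] (f : G →* H) (hf : Function.Surjective f)
    (h : SSA f.ker) : SSA (⊥ : Subgroup H) := by
  intro N L hN hL _ hNL
  obtain ⟨M, hM, h1, h2, h3⟩ := h (N.comap f) (L.comap f) (hN.comap f) (hL.comap f)
    (by intro x hx; rw [MonoidHom.mem_ker] at hx; simp [hx])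
    ((Subgroup.comap_lt_comap_of_surjective hf).2 hNL)
  refine ⟨M.map f, hM.map f hf, ?_, ?_, ?_⟩
  · rw [← Subgroup.map_comap_eq_self_of_surjective hf N]; exact Subgroup.map_mono h1
  · exact Subgroup.map_le_iff_le_comap.2 h2
  · rwa [Subgroup.relIndex_comap] at h3

theorem ssa_of_hom {G H : Type*} [Group G] [Group H] (f : G →* H) (hf : Function.Surjective f)
    (h : SSA (⊥ : Subgroup H)) : SSA f.ker := by
  intro N L hN hL hk hNL
  have e1 : (N.map f).comap f = N := Subgroup.comap_map_eq_self hk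
  have e2 : (L.map f).comap f = L := Subgroup.comap_map_eq_self (hk.trans hNL.le)
  obtain ⟨M, hM, h1, h2, h3⟩ := h (N.map f) (L.map f) (hN.map f hf) (hL.map f hf) bot_le
    (by rw [← Subgroup.comap_lt_comap_of_surjective hf, e1, e2]; exact hNL)
  refine ⟨M.comap f, hM.comap f, ?_, ?_, ?_⟩
  · rw [← e1]; exact Subgroup.comap_mono h1
  · rw [← e2]; exact Subgroup.comap_mono h2
  · rw [← e1, Subgroup.relIndex_comap, Subgroup.map_comap_eq_self_of_surjective hf]; exact h3

theorem ssa_quot {G : Type*} [Group G] (A : Subgroup G) [A.Normal] :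
    SSA (⊥ : Subgroup (G ⧸ A)) ↔ SSA A := by
  constructor
  · intro h
    have := ssa_of_hom _ (QuotientGroup.mk'_surjective A) h
    rwa [QuotientGroup.ker_mk'] at this
  · intro h
    apply ssa_hom _ (QuotientGroup.mk'_surjective A)
    rwa [QuotientGroup.ker_mk']

/-- normal subgroup with cyclic image gives a good step -/
theorem good_of_cyclic {G : Type*} [Group G] [Finite G] (N L D : Subgroup G) (hN : N.Normal)
    (hD : D.Normal) (hNL : N ≤ L) (hDL : D ≤ L) (hDN : ¬ D ≤ N) (d : G) (hd : d ∈ D)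
    (hgen : ∀ x ∈ D, ∃ k : ℤ, x⁻¹ * d ^ k ∈ N) : Good N L := by
  set π := QuotientGroup.mk' N with hπ
  have hsurj : Function.Surjective π := QuotientGroup.mk'_surjective N
  have hW : ∀ x ∈ D, ∃ k : ℤ, π x = π d ^ k := by
    intro x hx
    obtain ⟨k, hk⟩ := hgen x hx
    refine ⟨k, ?_⟩
    rw [← map_zpow]
    exact QuotientGroup.eq.2 hk
  have hd1 : π d ≠ 1 := by
    intro h1
    apply hDN
    intro x hx
    obtain ⟨k, hk⟩ := hW x hx
    rw [h1, one_zpow] at hk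
    exact (QuotientGroup.eq_one_iff x).1 hk
  have ho : orderOf (π d) ≠ 1 := by rwa [Ne, orderOf_eq_one_iff]
  obtain ⟨q, hq, m, hm⟩ := Nat.exists_prime_and_dvd ho
  have hpos : 0 < orderOf (π d) := orderOf_pos _
  have hm0 : m ≠ 0 := by intro h0; rw [h0, mul_zero] at hm; omega
  have how : orderOf (π d ^ m) = q := by
    rw [orderOf_pow_of_dvd hm0 ⟨q, by rw [hm, mul_comm]⟩, hm, Nat.mul_div_cancel _ (Nat.pos_of_ne_zero hm0)]
  have hZ : (Subgroup.zpowers (π d ^ m)).Normal := by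
    constructor
    rintro _ ⟨j, rfl⟩ g
    obtain ⟨g, rfl⟩ := hsurj g
    obtain ⟨k, hk⟩ := hW (g * d * g⁻¹) (hD.conj_mem d hd g)
    refine ⟨k * j, ?_⟩
    simp only [map_mul, map_inv] at hk
    have : π g * ((π d ^ m) ^ j) * (π g)⁻¹ = ((π g * π d * (π g)⁻¹) ^ m) ^ j := by
      simp
    show (π d ^ m) ^ (k * j) = π g * ((π d ^ m) ^ j) * (π g)⁻¹
    rw [this, hk, zpow_mul]
    congr 1
    rw [← zpow_natCast, ← zpow_natCast, ← zpow_mul, ← zpow_mul, mul_comm]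
  refine ⟨(Subgroup.zpowers (π d ^ m)).comap π, hZ.comap π, ?_, ?_, ?_⟩
  · intro x hx
    have : π x = 1 := (QuotientGroup.eq_one_iff x).2 hx
    simp [Subgroup.mem_comap, this]
  · rintro x ⟨j, hj⟩
    have hj : (π d ^ m) ^ j = π x := hj
    have : π ((d ^ m) ^ j) = π x := by rw [← hj]; simp
    have h2 := QuotientGroup.eq.1 this
    have h3 : ((d ^ m) ^ j) ∈ L := L.zpow_mem (L.pow_mem (hDL hd) _) _
    have := L.mul_mem h3 (hNL h2)
    simpa using this
  · have : (π.ker).relIndex ((Subgroup.zpowers (π d ^ m)).comap π) = q := by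
      rw [Subgroup.relIndex_ker, Subgroup.map_comap_eq_self_of_surjective hsurj, Nat.card_zpowers, how]
    rw [hπ, QuotientGroup.ker_mk'] at this
    rw [this]; exact hq

theorem good_of_cyc_quot {G : Type*} [Group G] [Finite G] (N L C B : Subgroup G) (hN : N.Normal)
    (hL : L.Normal) (hC : C.Normal) (hB : B.Normal) (hNL : N < L) (hjN : C ⊓ L ≤ N)
    (hiN : ¬ B ⊓ L ≤ N) (hcyc : haveI := hC.subgroupOf B; IsCyclic (↥B ⧸ C.subgroupOf B)) :
    Good N L := by
  have := hC.subgroupOf B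
  set ρ := QuotientGroup.mk' (C.subgroupOf B) with hρ
  obtain ⟨y, hy⟩ := (inferInstance : IsCyclic ↥((L.subgroupOf B).map ρ)).exists_generator
  obtain ⟨d, hd, hdy⟩ := y.2
  refine good_of_cyclic N L (B ⊓ L) hN (Subgroup.normal_inf_normal B L) hNL.le inf_le_right hiN d
    ⟨d.2, hd⟩ ?_
  rintro x ⟨hxB, hxL⟩
  obtain ⟨k, hk⟩ := hy ⟨ρ ⟨x, hxB⟩, ⟨⟨x, hxB⟩, hxL, rfl⟩⟩
  refine ⟨k, ?_⟩
  have hk' : ρ ⟨x, hxB⟩ = ρ (d ^ k) := by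
    rw [map_zpow, hdy]
    exact (congrArg Subtype.val hk).symm
  have h2 := QuotientGroup.eq.1 hk'
  rw [Subgroup.mem_subgroupOf] at h2
  apply hjN
  exact ⟨by simpa using h2, L.mul_mem (L.inv_mem hxL) (L.zpow_mem hd k)⟩

theorem ssa_of_ss {G : Type*} [Group G] [Finite G] (h : IsSupersoluble G) :
    SSA (⊥ : Subgroup G) := by
  obtain ⟨n, c, hc, h0, hl, hs⟩ := h
  intro N L hN hL _ hNL
  have hex : ∃ i : ℕ, ∃ hi : i < n + 1, ¬ (c ⟨i, hi⟩ ⊓ L ≤ N) := by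
    refine ⟨n, by omega, ?_⟩
    have : (⟨n, by omega⟩ : Fin (n+1)) = Fin.last n := rfl
    rw [this, hl, top_inf_eq]
    exact not_le_of_gt hNL
  classical
  obtain ⟨hi, hiN⟩ := Nat.find_spec hex
  have hmin := fun m => Nat.find_min (H := hex) (m := m)
  set i := Nat.find hex with hidef
  rcases hi' : i with _ | j
  · exfalso
    apply hiN
    have : (⟨i, hi⟩ : Fin (n+1)) = 0 := by ext; simp [hi']
    rw [this, h0]; simp
  have hj : j < n := by omega
  have hjN : c ⟨j, by omega⟩ ⊓ L ≤ N := by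
    by_contra hcon
    exact hmin j (by omega) ⟨by omega, hcon⟩
  obtain ⟨hle, hcyc⟩ := hs ⟨j, hj⟩
  have e1 : (⟨j, hj⟩ : Fin n).castSucc = ⟨j, by omega⟩ := rfl
  have e2 : (⟨j, hj⟩ : Fin n).succ = ⟨i, hi⟩ := by ext; simp [hi']
  have hCn := hc (⟨j, hj⟩ : Fin n).castSucc
  have hBn := hc (⟨j, hj⟩ : Fin n).succ
  rw [← e1] at hjN
  rw [← e2] at hiN
  exact good_of_cyc_quot N L _ _ hN hL hCn hBn hNL hjN hiN hcyc

theorem ss_of_ssa {G : Type*} [Group G] [Finite G] (h : SSA (⊥ : Subgroup G)) :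
    IsSupersoluble G := by
  classical
  have step : ∀ N : {N : Subgroup G // N.Normal}, ∃ M : {N : Subgroup G // N.Normal},
      N.1 ≤ M.1 ∧ (N.1 = ⊤ ∧ M.1 = ⊤ ∨ (N.1.relIndex M.1).Prime) := by
    rintro ⟨N, hN⟩
    by_cases hT : N = ⊤
    · exact ⟨⟨⊤, inferInstance⟩, le_top, Or.inl ⟨hT, rfl⟩⟩
    · obtain ⟨M, hM, h1, _, h3⟩ := h N ⊤ hN inferInstance bot_le (lt_top_iff_ne_top.2 hT)
      exact ⟨⟨M, hM⟩, h1, Or.inr h3⟩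
  choose F hF1 hF2 using step
  let f : ℕ → {N : Subgroup G // N.Normal} := fun i =>
    Nat.rec ⟨⊥, inferInstance⟩ (fun _ N => F N) i
  have hfs : ∀ i, f (i+1) = F (f i) := fun i => rfl
  have hgrow : ∀ i, (f i).1 = ⊤ ∨ i < Nat.card (f i).1 := by
    intro i
    induction i with
    | zero => right; exact Nat.card_pos
    | succ i ih =>
      rw [hfs]
      rcases hF2 (f i) with ⟨_, h2⟩ | h2
      · exact Or.inl h2
      · right
        have hlt : (f i).1 < (F (f i)).1 := by
          refine lt_of_le_of_ne (hF1 _) ?_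
          intro he
          rw [← he, Subgroup.relIndex_self] at h2
          exact Nat.not_prime_one h2
        have hc : Nat.card (f i).1 < Nat.card (F (f i)).1 := by
          apply Set.Finite.card_lt_card (Set.toFinite _) 
          exact hlt
        rcases ih with ih | ih
        · exact absurd hlt (by rw [ih]; exact not_top_lt)
        · omega
  refine ⟨Nat.card G, fun i => (f i).1, fun i => (f i).2, rfl, ?_, ?_⟩
  · rcases hgrow (Nat.card G) with h1 | h1
    · exact h1
    · exact absurd h1 (not_lt.2 (Subgroup.card_le_card_group _))
  · intro i
    have hle := hF1 (f i)
    have h2 := hF2 (f i)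
    rw [← hfs] at hle h2
    have := (f i).2.subgroupOf (f (i+1)).1
    refine ⟨hle, ?_⟩
    show IsCyclic (↥(f (i+1)).1 ⧸ ((f i).1.subgroupOf (f (i+1)).1))
    rcases h2 with ⟨h2, h3⟩ | h2
    · have : (f i).1.subgroupOf (f (i+1)).1 = ⊤ := by rw [h2]; simp
      have hs : Subsingleton (↥(f (i+1)).1 ⧸ ((f i).1.subgroupOf (f (i+1)).1)) := by
        rw [this]; exact QuotientGroup.subsingleton_quotient_top
      exact isCyclic_of_subsingleton
    · have := Fact.mk h2
      exact isCyclic_of_prime_card (p := (f i).1.relIndex (f (i+1)).1) rfl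

/-- Transfer along a join. -/
theorem good_sup {G : Type*} [Group G] (N L B : Subgroup G) (hN : N.Normal) (hL : L.Normal)
    (hB : B.Normal) (hNL : N < L) (hLB : L ⊓ B ≤ N) (h : SSA B) : Good N L := by
  have key : ∀ M : Subgroup G, N ≤ M → M ≤ L → (N ⊔ B) ⊓ M = N := by
    intro M h1 h2
    apply le_antisymm
    · rintro x ⟨hx, hxM⟩
      replace hx : x ∈ N ⊔ B := hx
      rw [Subgroup.mem_sup_of_normal_right] at hx
      obtain ⟨n, hn, b, hb, rfl⟩ := hx
      refine N.mul_mem hn (hLB ⟨h2 ?_, hb⟩)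
      have := M.mul_mem (M.inv_mem (h1 hn)) hxM
      simpa using this
    · exact le_inf le_sup_left h1
  have hlt : N ⊔ B < L ⊔ B := by
    refine lt_of_le_of_ne (sup_le_sup_right hNL.le _) ?_
    intro he
    have := key L hNL.le le_rfl
    rw [he, inf_eq_right.2 le_sup_left] at this
    exact hNL.ne this.symm
  obtain ⟨M, hM, h1, h2, h3⟩ := h (N ⊔ B) (L ⊔ B) inferInstance inferInstance le_sup_right hlt
  refine ⟨M ⊓ L, inferInstance, le_inf (le_sup_left.trans h1) hNL.le, inf_le_right, ?_⟩
  have e : M = (M ⊓ L) ⊔ (N ⊔ B) := by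
    apply le_antisymm
    · intro x hx
      have := h2 hx
      rw [Subgroup.mem_sup_of_normal_right] at this
      obtain ⟨l, hl, b, hb, rfl⟩ := this
      have hbM : b ∈ M := h1 (Subgroup.mem_sup_right hb)
      have hlM : l ∈ M := by simpa using M.mul_mem hx (M.inv_mem hbM)
      exact Subgroup.mul_mem_sup ⟨hlM, hl⟩ (Subgroup.mem_sup_right hb)
    · exact sup_le inf_le_left h1
  rw [e, Subgroup.relIndex_sup_right, ← Subgroup.inf_relIndex_right,
    key _ (le_inf (le_sup_left.trans h1) hNL.le) inf_le_right] at h3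
  exact h3

theorem good_inf {G : Type*} [Group G] (N L B : Subgroup G) (hN : N.Normal)
    (hNL : N ≤ L) (h : Good (N ⊓ B) (L ⊓ B)) : Good N L := by
  obtain ⟨M, hM, h1, h2, h3⟩ := h
  refine ⟨N ⊔ M, inferInstance, le_sup_left, sup_le hNL (h2.trans inf_le_left), ?_⟩
  rw [Subgroup.relIndex_sup_left]
  have : (N ⊓ B) ⊓ M = N ⊓ M := by
    apply le_antisymm (inf_le_inf_right _ inf_le_left)
    exact le_inf (le_inf inf_le_left (inf_le_right.trans (h2.trans inf_le_right))) inf_le_right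
  rw [← Subgroup.inf_relIndex_right, this, Subgroup.inf_relIndex_right] at h3
  exact h3

/-- extension principle -/
theorem ssa_ext {G : Type*} [Group G] (A C : Subgroup G) (hA : A.Normal)
    (h : SSA A) (h2 : ∀ N L : Subgroup G, N.Normal → L.Normal → N < L → L ≤ A → C ⊓ A ≤ N → Good N L) :
    SSA C := by
  intro N L hN hL hC hNL
  by_cases hLA : L ⊓ A ≤ N
  · exact good_sup N L A hN hL hA hNL hLA h
  · apply good_inf N L A hN hNL.le
    apply h2 _ _ inferInstance inferInstance _ inf_le_right (inf_le_inf_right _ hC)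
    refine lt_of_le_of_ne (inf_le_inf_right _ hNL.le) ?_
    intro he
    exact hLA (he ▸ inf_le_left)

theorem ssa_inf {G : Type*} [Group G] (A B : Subgroup G) (hA : A.Normal) (hB : B.Normal)
    (h : SSA A) (h' : SSA B) : SSA (A ⊓ B) := by
  apply ssa_ext A _ hA h
  intro N L hN hL hNL hLA hC
  apply good_sup N L B hN hL hB hNL _ h'
  refine le_trans ?_ hC
  exact le_inf (le_inf (inf_le_left.trans hLA) inf_le_right) (inf_le_left.trans hLA)


open scoped commutatorElement

def Spec {G : Type*} [Group G] (p : ℕ) (K : Subgroup G) (x : G) : Prop :=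
  (∃ a ∈ K, ∃ b ∈ K, x = ⁅a, b⁆) ∨ ∃ a ∈ K, x = a ^ (p - 1)

theorem Spec.map {G H : Type*} [Group G] [Group H] {p : ℕ} {K : Subgroup G} {x : G}
    (h : Spec p K x) (f : G →* H) : Spec p (K.map f) (f x) := by
  rcases h with ⟨a, ha, b, hb, rfl⟩ | ⟨a, ha, rfl⟩
  · exact Or.inl ⟨f a, ⟨a, ha, rfl⟩, f b, ⟨b, hb, rfl⟩, by rw [map_commutatorElement]⟩
  · exact Or.inr ⟨f a, ⟨a, ha, rfl⟩, by simp⟩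

theorem Spec.mono {G : Type*} [Group G] {p : ℕ} {K K' : Subgroup G} {x : G}
    (h : Spec p K x) (hK : K ≤ K') : Spec p K' x := by
  rcases h with ⟨a, ha, b, hb, rfl⟩ | ⟨a, ha, rfl⟩
  · exact Or.inl ⟨a, hK ha, b, hK hb, rfl⟩
  · exact Or.inr ⟨a, hK ha, rfl⟩

theorem Spec.mem {G : Type*} [Group G] {p : ℕ} {K : Subgroup G} {x : G}
    (h : Spec p K x) : x ∈ K := by
  rcases h with ⟨a, ha, b, hb, rfl⟩ | ⟨a, ha, rfl⟩
  · exact K.mul_mem (K.mul_mem (K.mul_mem ha hb) (K.inv_mem ha)) (K.inv_mem hb)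
  · exact K.pow_mem ha _

theorem spec_cent_prime {G : Type*} [Group G] {p : ℕ} (hp : p.Prime) (W : Subgroup G)
    (hW : W.Normal) (hc : Nat.card W = p) {x : G} (hx : Spec p ⊤ x) (w : G) (hw : w ∈ W) :
    x * w * x⁻¹ = w := by
  have := Fact.mk hp
  have hcyc : IsCyclic W := isCyclic_of_prime_card hc
  let e := IsCyclic.mulAutMulEquiv W
  let φ : G →* (ZMod (Nat.card W))ˣ := e.toMonoidHom.comp (MulAut.conjNormal (H := W))
  have h1 : φ x = 1 := by
    rcases hx with ⟨a, -, b, -, rfl⟩ | ⟨a, -, rfl⟩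
    · rw [map_commutatorElement, commutatorElement_eq_one_iff_mul_comm, mul_comm]
    · rw [map_pow]
      have hcard : Nat.card (ZMod (Nat.card W))ˣ = p - 1 := by
        rw [hc, Nat.card_eq_fintype_card, ZMod.card_units_eq_totient, Nat.totient_prime hp]
      rw [← hcard, pow_card_eq_one']
  have h2 : MulAut.conjNormal (H := W) x = 1 := e.injective (by rw [map_one]; exact h1)
  have h3 := congrArg (fun f : MulAut W => ((f ⟨w, hw⟩ : W) : G)) h2
  simpa [MulAut.conjNormal_apply] using h3

theorem spec_cent_factor {G : Type*} [Group G] {p : ℕ} (hp : p.Prime) (L L' : Subgroup G)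
    (hL : L.Normal) (hL' : L'.Normal) (hc : L.relIndex L' = p) {x : G}
    (hx : Spec p ⊤ x) (y : G) (hy : y ∈ L') : y⁻¹ * (x * y * x⁻¹) ∈ L := by
  have hs := QuotientGroup.mk'_surjective L
  have h := spec_cent_prime hp (L'.map (QuotientGroup.mk' L)) (hL'.map _ hs)
    (by rw [← Subgroup.relIndex_ker, QuotientGroup.ker_mk', hc])
    ((hx.map (QuotientGroup.mk' L)).mono le_top) _ ⟨y, hy, rfl⟩
  rw [← QuotientGroup.eq]
  exact h.symm

theorem coprime_fix {G : Type*} [Group G] {x y z : G} {n m : ℕ} (h1 : x * y * x⁻¹ = y * z)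
    (h2 : x * z * x⁻¹ = z) (hx : x ^ n = 1) (hz : z ^ m = 1) (hnm : n.Coprime m) : z = 1 := by
  have key : ∀ k : ℕ, x ^ k * y * (x ^ k)⁻¹ = y * z ^ k := by
    intro k
    induction k with
    | zero => simp
    | succ k ih =>
      have hz' : x * z ^ k * x⁻¹ = z ^ k := by
        rw [← conj_pow, h2]
      calc x ^ (k+1) * y * (x ^ (k+1))⁻¹ = x * (x ^ k * y * (x ^ k)⁻¹) * x⁻¹ := by
            rw [pow_succ']; group
        _ = (x * y * x⁻¹) * (x * z ^ k * x⁻¹) := by rw [ih]; group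
        _ = y * z ^ (k+1) := by rw [h1, hz', pow_succ', mul_assoc]
  have hn := key n
  rw [hx] at hn
  have hzn : z ^ n = 1 := by simpa using hn
  rw [← orderOf_eq_one_iff]
  exact Nat.eq_one_of_dvd_coprimes hnm (orderOf_dvd_of_pow_eq_one hzn) (orderOf_dvd_of_pow_eq_one hz)

theorem spec_step {G : Type*} [Group G] [Finite G] {p : ℕ} (hp : p.Prime) (L L' : Subgroup G)
    (hL : L.Normal) (hL' : L'.Normal) (hle : L ≤ L') (hP : IsPGroup p L')
    (hr : (L.relIndex L').Prime) {x : G} (hx : Spec p ⊤ x) (ho : (orderOf x).Coprime p)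
    (hcent : ∀ y ∈ L, x * y * x⁻¹ = y) : ∀ y ∈ L', x * y * x⁻¹ = y := by
  have := Fact.mk hp
  obtain ⟨k, hk⟩ := IsPGroup.iff_card.1 hP
  have hrp : L.relIndex L' = p := by
    have h1 := Subgroup.relIndex_dvd_card L L'
    rw [hk] at h1
    exact (Nat.prime_dvd_prime_iff_eq hr hp).1 (hr.dvd_of_dvd_pow h1)
  intro y hy
  have hz := spec_cent_factor hp L L' hL hL' hrp hx y hy
  have h1 : x * y * x⁻¹ = y * (y⁻¹ * (x * y * x⁻¹)) := by group
  have hzk : (y⁻¹ * (x * y * x⁻¹)) ^ (p ^ k) = 1 := by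
    have h5 : (⟨y⁻¹ * (x * y * x⁻¹), hle hz⟩ : L') ^ Nat.card L' = 1 := pow_card_eq_one'
    have := congrArg Subtype.val h5
    rw [hk] at this
    simpa using this
  have h6 := coprime_fix h1 (hcent _ hz) (pow_orderOf_eq_one x) hzk (ho.pow_right k)
  rw [h1, h6, mul_one]

theorem spec_cent {G : Type*} [Group G] [Finite G] {p : ℕ} (hp : p.Prime) (M : Subgroup G)
    (hG : SSA (⊥ : Subgroup G)) (hM : M.Normal) (hP : IsPGroup p M)
    {x : G} (hx : Spec p ⊤ x) (ho : (orderOf x).Coprime p) : ∀ y ∈ M, x * y * x⁻¹ = y := by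
  obtain ⟨L, ⟨hLn, hLM, hLc⟩, hmax⟩ := (Set.toFinite {L : Subgroup G | L.Normal ∧ L ≤ M ∧
    ∀ y ∈ L, x * y * x⁻¹ = y}).exists_maximal ⟨⊥, inferInstance, bot_le, by simp⟩
  rcases eq_or_lt_of_le hLM with rfl | hlt
  · exact hLc
  obtain ⟨L', hL', h1, h2, h3⟩ := hG L M hLn hM bot_le hlt
  have h4 := spec_step hp L L' hLn hL' h1 (hP.to_le h2) h3 hx ho hLc
  have h5 : L' ≤ L := hmax ⟨hL', h2, h4⟩ h1
  have h6 : L.relIndex L' = 1 := Subgroup.relIndex_eq_one.2 h5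
  rw [h6] at h3
  exact absurd h3 Nat.not_prime_one

theorem exists_eigen {A : Type*} [CommGroup A] [Finite A] [Nontrivial A] {p : ℕ} (hp : p.Prime)
    (hA : ∀ a : A, a ^ p = 1) (φ : A →* A) (hφ : ∀ a, φ^[p] a = φ a) :
    ∃ i : ℕ, ∃ w : A, w ≠ 1 ∧ φ w = w ^ i := by
  have := Fact.mk hp
  let _ : Module (ZMod p) (Additive A) := AddCommGroup.zmodModule (n := p) (fun x => hA x.toMul)
  let f : Module.End (ZMod p) (Additive A) := (MonoidHom.toAdditive φ).toZModLinearMap p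
  have hf : ∀ n (a : Additive A), (f ^ n) a = Additive.ofMul (φ^[n] a.toMul) := by
    intro n
    induction n with
    | zero => intro a; rfl
    | succ n ih =>
      intro a
      rw [pow_succ', Module.End.mul_apply, ih, Function.iterate_succ_apply']
      rfl
  have hfp : f ^ p = f := by
    ext a
    rw [hf, hφ]; rfl
  have hdvd : minpoly (ZMod p) f ∣ (Polynomial.X ^ p - Polynomial.X : Polynomial (ZMod p)) := by
    apply minpoly.dvd
    simp [hfp]
  have hint : IsIntegral (ZMod p) f := Algebra.IsIntegral.isIntegral f
  have hsplit : (Polynomial.X ^ p - Polynomial.X : Polynomial (ZMod p)).Splits := by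
    have := FiniteField.splits_X_pow_card_sub_X (K := ZMod p) p
    rw [ZMod.card, Algebra.algebraMap_self, Polynomial.map_id] at this
    exact this
  have hne : (Polynomial.X ^ p - Polynomial.X : Polynomial (ZMod p)) ≠ 0 :=
    FiniteField.X_pow_card_sub_X_ne_zero _ hp.one_lt
  have hs2 : (minpoly (ZMod p) f).Splits := hsplit.of_dvd hne hdvd
  obtain ⟨a, ha⟩ := hs2.exists_eval_eq_zero (minpoly.degree_pos hint).ne'
  have hev : f.HasEigenvalue a := Module.End.hasEigenvalue_of_isRoot ha
  obtain ⟨w, hw⟩ := hev.exists_hasEigenvector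
  refine ⟨a.val, w.toMul, ?_, ?_⟩
  · intro h; exact hw.2 (by simpa using h)
  · have h1 := hw.apply_eq_smul
    have h2 : a • w = a.val • w := by
      conv_lhs => rw [← ZMod.natCast_zmod_val a]
      rw [Nat.cast_smul_eq_nsmul]
    rw [h2] at h1
    exact h1


theorem exists_prime_normal {G : Type*} [Group G] [Finite G] {p : ℕ} (hp : p.Prime)
    (P K W : Subgroup G) (hPn : P.Normal) (hP : IsPGroup p P) (hPK : P ⊔ K = ⊤)
    (hW : W.Normal) (hWP : W ≤ P) (hW0 : W ≠ ⊥)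
    (hK : ∀ x, Spec p K x → ∀ y ∈ P, x * y * x⁻¹ = y) :
    ∃ M : Subgroup G, M.Normal ∧ M ≤ W ∧ (Nat.card M).Prime := by
  have hpF := Fact.mk hp
  have hWK : ∀ x, Spec p K x → ∀ y ∈ W, x * y * x⁻¹ = y := fun x hx y hy => hK x hx y (hWP hy)
  obtain ⟨V, ⟨hVn, hVW, hV0⟩, hmin⟩ := (Set.toFinite {V : Subgroup G | V.Normal ∧ V ≤ W ∧
    V ≠ ⊥}).exists_minimal ⟨W, hW, le_rfl, hW0⟩
  have hmin' : ∀ U : Subgroup G, U.Normal → U ≤ V → (∃ u ∈ U, u ≠ 1) → V ≤ U := by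
    rintro U hU hUV ⟨u, hu, hu1⟩
    exact hmin ⟨hU, hUV.trans hVW, fun h => hu1 (by rw [h] at hu; simpa using hu)⟩ hUV
  have hVp : IsPGroup p V := hP.to_le (hVW.trans hWP)
  have hVnt : Nontrivial V := (Subgroup.nontrivial_iff_ne_bot V).2 hV0
  have hpV : p ∣ Nat.card V := by
    obtain ⟨n, hn, hc⟩ := hVp.nontrivial_iff_card.1 hVnt
    rw [hc]; exact dvd_pow_self p hn.ne'
  -- P centralizes V
  have hcent : ∀ v ∈ V, ∀ x ∈ P, x * v * x⁻¹ = v := by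
    let _ : MulAction P V := MulAction.compHom V ((MulAut.conjNormal (H := V)).comp P.subtype)
    have hact : ∀ (x : P) (v : V), ((x • v : V) : G) = x * v * (x : G)⁻¹ := fun x v =>
      MulAut.conjNormal_apply (H := V) (x : G) v
    obtain ⟨b, hb, hb1⟩ := hP.exists_fixed_point_of_prime_dvd_card_of_fixed_point V hpV
      (a := 1) (by intro x; ext; rw [hact]; simp)
    have hle := hmin' (V ⊓ Subgroup.centralizer P) inferInstance inf_le_left
      ⟨b, ⟨b.2, by
        show (b : G) ∈ Subgroup.centralizer (P : Set G)
        rw [Subgroup.mem_centralizer_iff]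
        intro x hx
        have := hact ⟨x, hx⟩ b
        rw [hb ⟨x, hx⟩] at this
        exact (eq_mul_inv_iff_mul_eq.1 this).symm⟩, fun h => hb1 (by ext; exact h.symm)⟩
    intro v hv x hx
    have := (Subgroup.mem_centralizer_iff.1 (hle hv).2) x hx
    rw [this]; simp
  have hcomm : ∀ v ∈ V, ∀ w ∈ V, v * w = w * v := by
    intro v hv w hw
    have := hcent w hw v (hWP (hVW hv))
    exact mul_inv_eq_iff_eq_mul.1 this
  -- exponent p
  have hexp : ∀ v ∈ V, v ^ p = 1 := by
    let U : Subgroup G :=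
      { carrier := {v | v ∈ V ∧ v ^ p = 1}
        mul_mem' := by
          rintro a b ⟨ha, ha'⟩ ⟨hb, hb'⟩
          exact ⟨V.mul_mem ha hb, by rw [(show Commute a b from hcomm a ha b hb).mul_pow, ha', hb', one_mul]⟩
        one_mem' := ⟨V.one_mem, one_pow p⟩
        inv_mem' := by
          rintro a ⟨ha, ha'⟩
          exact ⟨V.inv_mem ha, by rw [inv_pow, ha', inv_one]⟩ }
    have hU : U.Normal := ⟨by
      rintro a ⟨ha, ha'⟩ g
      exact ⟨hVn.conj_mem a ha g, by rw [conj_pow, ha']; simp⟩⟩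
    obtain ⟨u, hu⟩ := exists_prime_orderOf_dvd_card' p hpV
    have hle := hmin' U hU (fun a ha => ha.1) ⟨u, ⟨u.2, by
      have := pow_orderOf_eq_one u
      rw [hu] at this
      simpa using congrArg Subtype.val this⟩, by
        intro h
        have : u = 1 := by ext; exact h
        rw [this, orderOf_one] at hu
        exact hp.one_lt.ne hu⟩
    exact fun v hv => (hle hv).2
  -- eigenvalues
  have heig : ∀ k ∈ K, ∃ i : ℕ, ∀ v ∈ V, k * v * k⁻¹ = v ^ i := by
    intro k hk
    let _ : CommGroup V := { (inferInstance : Group V) with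
      mul_comm := fun a b => Subtype.ext (hcomm a a.2 b b.2) }
    have hφn : ∀ n (a : V), (((MulAut.conjNormal (H := V) k).toMonoidHom^[n] a : V) : G)
        = k ^ n * a * (k ^ n)⁻¹ := by
      intro n
      induction n with
      | zero => intro a; simp
      | succ n ih =>
        intro a
        rw [Function.iterate_succ_apply']
        have := MulAut.conjNormal_apply (H := V) k ((MulAut.conjNormal (H := V) k).toMonoidHom^[n] a)
        refine this.trans ?_
        rw [ih, pow_succ']; group
    obtain ⟨i, w, hw1, hw⟩ := exists_eigen hp
      (fun a : V => Subtype.ext (by simpa using hexp a a.2))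
      (MulAut.conjNormal (H := V) k).toMonoidHom (by
        intro a
        ext
        rw [hφn]
        have h1 := hφn 1 a
        rw [Function.iterate_one, pow_one] at h1
        rw [h1]
        have hp1 : k ^ p = k * k ^ (p - 1) := by
          rw [← pow_succ', Nat.sub_add_cancel hp.one_lt.le]
        have h2 := hWK (k ^ (p-1)) (Or.inr ⟨k, hk, rfl⟩) a (hVW a.2)
        calc k ^ p * (a : G) * (k ^ p)⁻¹ = k * (k ^ (p-1) * a * (k ^ (p-1))⁻¹) * k⁻¹ := by
              rw [hp1]; group
          _ = _ := by rw [h2])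
    have hw' : k * (w : G) * k⁻¹ = (w : G) ^ i := by
      have h1 := hφn 1 w
      rw [Function.iterate_one, pow_one, hw] at h1
      rw [← h1]; simp
    refine ⟨i, ?_⟩
    let U : Subgroup G :=
      { carrier := {v | v ∈ V ∧ k * v * k⁻¹ = v ^ i}
        mul_mem' := by
          rintro a b ⟨ha, ha'⟩ ⟨hb, hb'⟩
          refine ⟨V.mul_mem ha hb, ?_⟩
          rw [(show Commute a b from hcomm a ha b hb).mul_pow, ← ha', ← hb']; group
        one_mem' := ⟨V.one_mem, by simp⟩
        inv_mem' := by
          rintro a ⟨ha, ha'⟩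
          exact ⟨V.inv_mem ha, by rw [inv_pow, ← ha']; group⟩ }
    have hU : U.Normal := ⟨by
      rintro a ⟨ha, ha'⟩ g
      have hg : g ∈ P ⊔ K := by rw [hPK]; trivial
      rw [Subgroup.mem_sup_of_normal_left] at hg
      obtain ⟨x, hx, l, hl, rfl⟩ := hg
      have hla : l * a * l⁻¹ ∈ V := hVn.conj_mem a ha l
      have e : x * l * a * (x * l)⁻¹ = l * a * l⁻¹ := by
        rw [← hcent _ hla x hx]; group
      rw [e]
      refine ⟨hla, ?_⟩
      have h2 := hWK ⁅k⁻¹, l⁻¹⁆ (Or.inl ⟨_, K.inv_mem hk, _, K.inv_mem hl, rfl⟩) a (hVW ha)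
      calc k * (l * a * l⁻¹) * k⁻¹ = l * (k * (⁅k⁻¹, l⁻¹⁆ * a * ⁅k⁻¹, l⁻¹⁆⁻¹) * k⁻¹) * l⁻¹ := by
            rw [commutatorElement_def]; group
        _ = l * a ^ i * l⁻¹ := by rw [h2, ha']
        _ = _ := by rw [conj_pow]⟩
    have hle := hmin' U hU (fun a ha => ha.1) ⟨w, ⟨w.2, hw'⟩, fun h => hw1 (by ext; exact h)⟩
    exact fun v hv => (hle hv).2
  obtain ⟨v, hv, hv1⟩ := (Subgroup.ne_bot_iff_exists_ne_one).1 hV0 |>.elim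
    (fun a ha => (⟨a.1, a.2, fun h => ha (by ext; exact h)⟩ : ∃ v, v ∈ V ∧ v ≠ 1))
  refine ⟨Subgroup.zpowers v, ⟨?_⟩, ?_, ?_⟩
  · rintro _ ⟨j, rfl⟩ g
    have hg : g ∈ P ⊔ K := by rw [hPK]; trivial
    rw [Subgroup.mem_sup_of_normal_left] at hg
    obtain ⟨x, hx, l, hl, rfl⟩ := hg
    obtain ⟨i, hi⟩ := heig l hl
    have hvj : v ^ j ∈ V := V.zpow_mem hv j
    have hla : l * v ^ j * l⁻¹ ∈ V := hVn.conj_mem _ hvj l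
    have e : x * l * v ^ j * (x * l)⁻¹ = l * v ^ j * l⁻¹ := by
      rw [← hcent _ hla x hx]; group
    show x * l * v ^ j * (x * l)⁻¹ ∈ _
    rw [e, hi _ hvj]
    exact Subgroup.pow_mem _ (Subgroup.zpow_mem _ (Subgroup.mem_zpowers v) j) i
  · rw [Subgroup.zpowers_le]; exact hVW hv
  · rw [Nat.card_zpowers, orderOf_eq_prime (hexp v hv) hv1]; exact hp


theorem Spec.lift {G H : Type*} [Group G] [Group H] {p : ℕ} {K : Subgroup G} (f : G →* H) {y : H}
    (h : Spec p (K.map f) y) : ∃ x, Spec p K x ∧ f x = y := by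
  rcases h with ⟨_, ⟨a, ha, rfl⟩, _, ⟨b, hb, rfl⟩, rfl⟩ | ⟨_, ⟨a, ha, rfl⟩, rfl⟩
  · exact ⟨_, Or.inl ⟨a, ha, b, hb, rfl⟩, by rw [map_commutatorElement]⟩
  · exact ⟨_, Or.inr ⟨a, ha, rfl⟩, by simp⟩

theorem Spec.coe {G : Type*} [Group G] {p : ℕ} {K H : Subgroup G} (hKH : K ≤ H) {x : G}
    (h : Spec p K x) : ∃ y : H, Spec p ⊤ y ∧ (y : G) = x := by
  rcases h with ⟨a, ha, b, hb, rfl⟩ | ⟨a, ha, rfl⟩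
  · exact ⟨⁅⟨a, hKH ha⟩, ⟨b, hKH hb⟩⁆, Or.inl ⟨_, trivial, _, trivial, rfl⟩, rfl⟩
  · exact ⟨⟨a, hKH ha⟩ ^ (p-1), Or.inr ⟨_, trivial, rfl⟩, rfl⟩

theorem coprime_of_sylow {G : Type*} [Group G] [Finite G] {p : ℕ} (hp : p.Prime) (P : Subgroup G)
    (hP : IsPGroup p P) (hi : ¬ p ∣ P.index) : (Nat.card P).Coprime P.index := by
  have := Fact.mk hp
  obtain ⟨k, hk⟩ := IsPGroup.iff_card.1 hP
  rw [hk]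
  exact Nat.Coprime.pow_left k ((Nat.Prime.coprime_iff_not_dvd hp).2 hi)

theorem stepB {G : Type*} [Group G] [Finite G] (h : ∀ H : Subgroup G, H ≠ ⊤ → IsSupersoluble H)
    {p : ℕ} (hp : p.Prime) (P : Subgroup G) (hPn : P.Normal) (hP : IsPGroup p P)
    (hi : ¬ p ∣ P.index) (hP0 : P ≠ ⊥) : SSA P := by
  obtain ⟨K, hK⟩ := Subgroup.exists_right_complement'_of_coprime (coprime_of_sylow hp P hP hi)
  have hKT : K ≠ ⊤ := by
    rintro rfl
    apply hP0
    have := hK.disjoint.eq_bot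
    simpa using this
  have hs := ssa_of_ss (h K hKT)
  let f : K →* G ⧸ P := (QuotientGroup.mk' P).comp K.subtype
  have hf : Function.Surjective f := by
    intro y
    obtain ⟨g, rfl⟩ := QuotientGroup.mk'_surjective P y
    have hg : g ∈ P ⊔ K := by rw [hK.sup_eq_top]; trivial
    rw [sup_comm, Subgroup.mem_sup_of_normal_right] at hg
    obtain ⟨k, hk, x, hx, rfl⟩ := hg
    exact ⟨⟨k, hk⟩, QuotientGroup.eq.2 (by simpa using hx)⟩
  have hker : f.ker = ⊥ := by
    rw [eq_bot_iff]
    intro k hk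
    have h1 : (k : G) ∈ P := (QuotientGroup.eq_one_iff (k : G)).1 hk
    have h2 : (k : G) ∈ P ⊓ K := ⟨h1, k.2⟩
    rw [hK.disjoint.eq_bot] at h2
    rw [Subgroup.mem_bot]
    ext; simpa using h2
  rw [← ssa_quot]
  apply ssa_hom f hf
  rw [hker]; exact hs

theorem stepD {G : Type*} [Group G] [Finite G] {p : ℕ} (hp : p.Prime)
    (P K : Subgroup G) (hPn : P.Normal) (hP : IsPGroup p P) (hPK : P ⊔ K = ⊤)
    (hK : ∀ x, Spec p K x → ∀ y ∈ P, x * y * x⁻¹ = y) (hS : SSA P) : SSA (⊥ : Subgroup G) := by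
  apply ssa_ext P ⊥ hPn hS
  intro N L hN hL hNL hLP _
  set π := QuotientGroup.mk' N with hπ
  have hs : Function.Surjective π := QuotientGroup.mk'_surjective N
  obtain ⟨M, hM, hMW, hMp⟩ := exists_prime_normal hp (P.map π) (K.map π) (L.map π) (hPn.map π hs)
    (hP.map π) (by rw [← Subgroup.map_sup, hPK, Subgroup.map_top_of_surjective π hs])
    (hL.map π hs) (Subgroup.map_mono hLP) (by
      intro h0
      rw [Subgroup.map_eq_bot_iff, hπ, QuotientGroup.ker_mk'] at h0
      exact not_le_of_gt hNL h0) (by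
      rintro y hy _ ⟨u, hu, rfl⟩
      obtain ⟨x, hx, rfl⟩ := hy.lift π
      rw [← map_inv, ← map_mul, ← map_mul, hK x hx u hu])
  refine ⟨M.comap π, hM.comap π, ?_, ?_, ?_⟩
  · intro x hx
    have : π x = 1 := (QuotientGroup.eq_one_iff x).2 hx
    rw [Subgroup.mem_comap, this]; exact M.one_mem
  · have := Subgroup.comap_mono (f := π) hMW
    rwa [Subgroup.comap_map_eq_self (by rw [hπ, QuotientGroup.ker_mk']; exact hNL.le)] at this
  · have : (π.ker).relIndex (M.comap π) = Nat.card M := by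
      rw [Subgroup.relIndex_ker, Subgroup.map_comap_eq_self_of_surjective hs]
    rw [hπ, QuotientGroup.ker_mk'] at this
    rw [this]; exact hMp

theorem stepC {G : Type*} [Group G] [Finite G] (h : ∀ H : Subgroup G, H ≠ ⊤ → IsSupersoluble H)
    {p : ℕ} (hp : p.Prime) (P : Subgroup G) (hPn : P.Normal) (hP : IsPGroup p P)
    (hi : ¬ p ∣ P.index) (A : Subgroup G) (hA : A.Normal) (hAP : A < P) (hS : SSA A) :
    SSA (⊥ : Subgroup G) := by
  have hSP := stepB h hp P hPn hP hi (ne_bot_of_gt hAP)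
  obtain ⟨K, hK⟩ := Subgroup.exists_right_complement'_of_coprime (coprime_of_sylow hp P hP hi)
  obtain ⟨M, ⟨hMn, hAM, hMP⟩, hmax⟩ := (Set.toFinite {M : Subgroup G | M.Normal ∧ A ≤ M ∧
    M < P}).exists_maximal ⟨A, hA, le_rfl, hAP⟩
  have hidx : (M.relIndex P).Prime := by
    obtain ⟨M', hM', h1, h2, h3⟩ := hS M P hMn hPn hAM hMP
    rcases eq_or_lt_of_le h2 with rfl | h2
    · exact h3
    · have h5 : M' ≤ M := hmax ⟨hM', hAM.trans h1, h2⟩ h1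
      rw [Subgroup.relIndex_eq_one.2 h5] at h3
      exact absurd h3 Nat.not_prime_one
  have hT : M ⊔ K ≠ ⊤ := by
    intro hT
    apply not_le_of_gt hMP
    intro x hx
    have hg : x ∈ M ⊔ K := by rw [hT]; trivial
    rw [Subgroup.mem_sup_of_normal_left] at hg
    obtain ⟨m, hm, k, hk, rfl⟩ := hg
    have hkP : k ∈ P := by simpa using P.mul_mem (P.inv_mem (hMP.le hm)) hx
    have h2 : k ∈ P ⊓ K := ⟨hkP, hk⟩
    rw [hK.disjoint.eq_bot, Subgroup.mem_bot] at h2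
    rw [h2, mul_one]; exact hm
  have hs := ssa_of_ss (h _ hT)
  refine stepD hp P K hPn hP hK.sup_eq_top ?_ hSP
  intro x hx
  have ho : (orderOf x).Coprime p := by
    have h1 : orderOf x ∣ Nat.card K := Subgroup.orderOf_dvd_natCard K hx.mem
    rw [hK.symm.index_eq_card.symm] at h1
    exact Nat.Coprime.coprime_dvd_left h1 ((Nat.Prime.coprime_iff_not_dvd hp).2 hi).symm
  apply spec_step hp M P hMn hPn hMP.le hP hidx (hx.mono le_top) ho
  obtain ⟨y, hy, rfl⟩ := hx.coe (H := M ⊔ K) le_sup_right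
  intro m hm
  have := spec_cent hp (M.subgroupOf (M ⊔ K)) hs (hMn.subgroupOf _)
    ((hP.to_le hMP.le).comap_subtype) hy
    (by rwa [Subgroup.orderOf_coe] at ho) ⟨m, Subgroup.mem_sup_left hm⟩ hm
  exact congrArg Subtype.val this


theorem SSA.mono {G : Type*} [Group G] {A B : Subgroup G} (h : SSA A) (hAB : A ≤ B) : SSA B :=
  fun N L hN hL hB hNL => h N L hN hL (hAB.trans hB) hNL

theorem ssa_surj {G H : Type*} [Group G] [Group H] (f : G →* H) (hf : Function.Surjective f)
    (h : SSA (⊥ : Subgroup G)) : SSA (⊥ : Subgroup H) := ssa_hom f hf (h.mono bot_le)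

theorem cent_of_min {G : Type*} [Group G] [Finite G] {p : ℕ} (hp : p.Prime)
    (hmin : ∀ q : ℕ, q.Prime → q ∣ Nat.card G → p ≤ q) (H D : Subgroup G) (hH : IsSupersoluble H)
    (hDH : D ≤ H) (hDn : (D.subgroupOf H).Normal) (hD : IsPGroup p D) (x : G) (hx : x ∈ H)
    (ho : (orderOf x).Coprime p) : x ∈ Subgroup.centralizer (D : Set G) := by
  have h1 : x ^ (p - 1) ∈ Subgroup.centralizer (D : Set G) := by
    rw [Subgroup.mem_centralizer_iff]
    intro y hy
    have := spec_cent hp (D.subgroupOf H) (ssa_of_ss hH) hDn hD.comap_subtype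
      (x := (⟨x, hx⟩ : H) ^ (p - 1)) (Or.inr ⟨_, trivial, rfl⟩) (by
        refine Nat.Coprime.coprime_dvd_left (orderOf_pow_dvd _) ?_
        rwa [← Subgroup.orderOf_coe]) ⟨y, hDH hy⟩ hy
    have h2 := congrArg Subtype.val this
    exact (mul_inv_eq_iff_eq_mul.1 h2).symm
  have hc : (p - 1).Coprime (orderOf x) := by
    apply Nat.coprime_of_dvd
    intro q hq hqp hqo
    have h3 := Nat.le_of_dvd (by have := hp.one_lt; omega) hqp
    have h4 := hmin q hq (hqo.trans (orderOf_dvd_natCard x))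
    have := hp.one_lt
    omega
  obtain ⟨m, hm⟩ := exists_pow_eq_self_of_coprime hc
  rw [← hm]
  exact Subgroup.pow_mem _ h1 m

theorem sup_sylow {G : Type*} [Group G] [Finite G] {p : ℕ} [Fact p.Prime] (C : Subgroup G)
    [C.Normal] (hC : ∀ x : G, (orderOf x).Coprime p → x ∈ C) (S : Sylow p G) (g : G) :
    ∃ c ∈ C, ∃ s ∈ S, g = c * s := by
  have hp : p.Prime := Fact.out
  have hQ : IsPGroup p (G ⧸ C) := by
    rw [isPGroup_iff_pow_pow_eq_one]
    intro y
    obtain ⟨x, rfl⟩ := QuotientGroup.mk'_surjective C y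
    obtain ⟨k, m, hm, hk⟩ := Nat.exists_eq_pow_mul_and_not_dvd (orderOf_pos x).ne' p hp.ne_one
    refine ⟨k, ?_⟩
    rw [← map_pow]
    apply (QuotientGroup.eq_one_iff _).2
    apply hC
    rw [orderOf_pow_of_dvd (pow_pos hp.pos k).ne' ⟨m, hk⟩, hk, Nat.mul_div_cancel_left _ (pow_pos hp.pos k)]
    exact ((Nat.Prime.coprime_iff_not_dvd hp).2 hm).symm
  have hs := QuotientGroup.mk'_surjective C
  have hT : ((S.mapSurjective hs : Sylow p (G ⧸ C)) : Subgroup (G ⧸ C)) = ⊤ :=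
    ((S.mapSurjective hs).3 (Q := ⊤) (hQ.to_subgroup ⊤) le_top).symm
  rw [Sylow.coe_mapSurjective] at hT
  have hy : QuotientGroup.mk' C g ∈ (S : Subgroup G).map (QuotientGroup.mk' C) := by
    rw [hT]; trivial
  obtain ⟨s, hs', he⟩ := hy
  have h5 : s⁻¹ * g ∈ C := QuotientGroup.eq.1 he
  have h6 : g * s⁻¹ ∈ C := by
    have := (inferInstance : C.Normal).conj_mem _ h5 s
    simpa [mul_assoc] using this
  exact ⟨g * s⁻¹, h6, s, hs', by group⟩

theorem sylow_conj_in {G : Type*} [Group G] [Finite G] {p : ℕ} [Fact p.Prime] (C : Subgroup G)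
    [C.Normal] (hC : ∀ x : G, (orderOf x).Coprime p → x ∈ C) (S T : Sylow p G) :
    ∃ c ∈ C, c • S = T := by
  obtain ⟨g, hg⟩ := MulAction.exists_smul_eq G S T
  obtain ⟨c, hc, s, hs, rfl⟩ := sup_sylow C hC S g
  refine ⟨c, hc, ?_⟩
  rw [← hg, mul_smul]
  congr 1
  symm
  rw [Sylow.smul_eq_iff_mem_normalizer]
  exact Subgroup.le_normalizer hs

theorem lt_normalizer_inf {G : Type*} [Group G] [Finite G] {p : ℕ} [Fact p.Prime]
    (P D : Subgroup G) (hP : IsPGroup p P) (hDP : D < P) :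
    D < P ⊓ Subgroup.normalizer (D : Set G) := by
  have hnil : Group.IsNilpotent P := hP.isNilpotent
  have hlt : D.subgroupOf P < ⊤ := by
    rw [lt_top_iff_ne_top, Ne, Subgroup.subgroupOf_eq_top]
    exact not_le_of_gt hDP
  have h1 := Group.normalizerCondition_of_isNilpotent (G := P) (D.subgroupOf P) hlt
  obtain ⟨y, hy, hyD⟩ := SetLike.exists_of_lt h1
  refine lt_of_le_of_ne (le_inf hDP.le Subgroup.le_normalizer) ?_
  intro he
  apply hyD
  have : (y : G) ∈ P ⊓ Subgroup.normalizer (D : Set G) := by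
    refine ⟨y.2, ?_⟩
    show (y : G) ∈ Subgroup.normalizer (D : Set G)
    rw [Subgroup.mem_normalizer_iff] at hy ⊢
    intro h
    constructor
    · intro hh
      exact (hy ⟨h, hDP.le hh⟩).1 hh
    · intro hh
      have hP' : h ∈ P := by
        have h3 := P.mul_mem (P.mul_mem (P.inv_mem y.2) (hDP.le hh)) y.2
        simpa [mul_assoc] using h3
      exact (hy ⟨h, hP'⟩).2 hh
  rw [← he] at this
  exact this

theorem fusion {G : Type*} [Group G] [Finite G] {p : ℕ} [Fact p.Prime]
    (hcent : ∀ D : Subgroup G, IsPGroup p D → D ≠ ⊥ → ∀ x ∈ Subgroup.normalizer (D : Set G),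
      (orderOf x).Coprime p → x ∈ Subgroup.centralizer (D : Set G)) :
    ∀ n : ℕ, ∀ P Q : Sylow p G, Nat.card G - Nat.card ↥((P : Subgroup G) ⊓ Q) = n →
      ∃ c ∈ Subgroup.centralizer (((P : Subgroup G) ⊓ Q : Subgroup G) : Set G), c • P = Q := by
  intro n
  induction n using Nat.strong_induction_on with
  | _ n ih =>
  intro P Q hn
  by_cases hPQ : P = Q
  · exact ⟨1, Subgroup.one_mem _, by rw [one_smul, hPQ]⟩
  set D : Subgroup G := (P : Subgroup G) ⊓ Q with hD
  by_cases hD0 : D = ⊥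
  · obtain ⟨g, hg⟩ := MulAction.exists_smul_eq G P Q
    refine ⟨g, ?_, hg⟩
    rw [hD0, Subgroup.mem_centralizer_iff]
    intro y hy
    have : y = 1 := by simpa using hy
    rw [this]; simp
  have hDP : D < P := by
    refine lt_of_le_of_ne inf_le_left ?_
    intro he
    apply hPQ
    have h1 : (P : Subgroup G) ≤ Q := by rw [← he]; exact inf_le_right
    exact Sylow.ext (P.3 Q.2 h1).symm
  have hDQ : D < Q := by
    refine lt_of_le_of_ne inf_le_right ?_
    intro he
    apply hPQ
    have h1 : (Q : Subgroup G) ≤ P := by rw [← he]; exact inf_le_left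
    exact Sylow.ext (Q.3 P.2 h1)
  have hDp : IsPGroup p D := P.2.to_le hDP.le
  have hDsub : ∀ A B : Sylow p G, D < (A : Subgroup G) ⊓ B →
      ∃ c ∈ Subgroup.centralizer (D : Set G), c • A = B := by
    intro A B hAB
    have hlt : Nat.card D < Nat.card ↥((A : Subgroup G) ⊓ B) :=
      Set.Finite.card_lt_card (Set.toFinite _) hAB
    have hle := Subgroup.card_le_card_group ((A : Subgroup G) ⊓ B)
    obtain ⟨c, hc, h2⟩ := ih _ (by omega) A B rfl
    exact ⟨c, Subgroup.centralizer_le (show (D : Set G) ⊆ _ from hAB.le) hc, h2⟩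
  set N := Subgroup.normalizer (D : Set G) with hN
  have hPN := lt_normalizer_inf P D P.2 hDP
  have hQN := lt_normalizer_inf Q D Q.2 hDQ
  obtain ⟨S, hS⟩ := ((P.2.to_le inf_le_left : IsPGroup p ((P : Subgroup G) ⊓ N : Subgroup G)).comap_subtype
    (K := N)).exists_le_sylow
  obtain ⟨T, hT⟩ := ((Q.2.to_le inf_le_left : IsPGroup p ((Q : Subgroup G) ⊓ N : Subgroup G)).comap_subtype
    (K := N)).exists_le_sylow
  have hCn : ((Subgroup.centralizer (D : Set G)).subgroupOf N).Normal := by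
    constructor
    intro x hx g
    rw [Subgroup.mem_subgroupOf, Subgroup.mem_centralizer_iff] at hx ⊢
    intro y hy
    have h1 : (g : G)⁻¹ * y * g ∈ D := by
      have := (Subgroup.mem_normalizer_iff.1 (N.inv_mem g.2)) y
      simpa using this.1 hy
    have h2 := hx _ h1
    have h3 : y = g * ((g : G)⁻¹ * y * g) * (g : G)⁻¹ := by group
    calc y * (g * x * (g : G)⁻¹) = g * (((g : G)⁻¹ * y * g) * x) * (g : G)⁻¹ := by group
      _ = g * (x * ((g : G)⁻¹ * y * g)) * (g : G)⁻¹ := by rw [h2]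
      _ = (g * x * (g : G)⁻¹) * y := by group
  obtain ⟨c, hc, hcST⟩ := sylow_conj_in ((Subgroup.centralizer (D : Set G)).subgroupOf N) (by
    intro x hx
    exact hcent D hDp hD0 x x.2 (by rwa [Subgroup.orderOf_coe])) S T
  have hc' : (c : G) ∈ Subgroup.centralizer (D : Set G) := hc
  obtain ⟨P1, hP1⟩ := (S.2.map N.subtype).exists_le_sylow
  obtain ⟨a, ha, haP⟩ := hDsub P P1 (lt_of_lt_of_le hPN (by
    rintro x ⟨hxP, hxN⟩
    exact ⟨hxP, hP1 ⟨⟨x, hxN⟩, hS ⟨hxP, hxN⟩, rfl⟩⟩))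
  obtain ⟨b, hb, hbQ⟩ := hDsub ((c : G) • P1) Q (lt_of_lt_of_le hQN (by
    rintro x ⟨hxQ, hxN⟩
    refine ⟨?_, hxQ⟩
    have hxT : (⟨x, hxN⟩ : N) ∈ T := hT ⟨hxQ, hxN⟩
    rw [← hcST, ← SetLike.mem_coe, Sylow.coe_smul, Set.mem_smul_set_iff_inv_smul_mem] at hxT
    show x ∈ (((c : G) • P1 : Sylow p G) : Set G)
    rw [Sylow.coe_smul, Set.mem_smul_set_iff_inv_smul_mem]
    apply hP1
    exact ⟨_, hxT, by simp⟩))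
  refine ⟨b * (c * a), Subgroup.mul_mem _ hb (Subgroup.mul_mem _ hc' ha), ?_⟩
  rw [mul_smul, mul_smul, haP, hbQ]

theorem exists_normal_p_index {G : Type*} [Group G] [Finite G] {p : ℕ} [Fact p.Prime]
    (hpG : p ∣ Nat.card G)
    (hcent : ∀ D : Subgroup G, IsPGroup p D → D ≠ ⊥ → ∀ x ∈ Subgroup.normalizer (D : Set G),
      (orderOf x).Coprime p → x ∈ Subgroup.centralizer (D : Set G)) :
    ∃ N : Subgroup G, N.Normal ∧ N ≠ ⊤ ∧ ∃ k, N.index = p ^ k := by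
  let P : Sylow p G := default
  have hP0 : (P : Subgroup G) ≠ ⊥ := P.ne_bot_of_dvd_card hpG
  have hPnt : Nontrivial P := (Subgroup.nontrivial_iff_ne_bot _).2 hP0
  have hnil : Group.IsNilpotent P := P.2.isNilpotent
  have hNP : ∀ g ∈ Subgroup.normalizer (P : Set G), ∃ s ∈ P, ∃ c ∈ Subgroup.centralizer (P : Set G),
      g = c * s := by
    intro g hg
    have hCn : ((Subgroup.centralizer (P : Set G)).subgroupOf (Subgroup.normalizer (P : Set G))).Normal := by
      constructor
      intro x hx g
      rw [Subgroup.mem_subgroupOf, Subgroup.mem_centralizer_iff] at hx ⊢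
      intro y hy
      have h1 : (g : G)⁻¹ * y * g ∈ (P : Subgroup G) := by
        have := (Subgroup.mem_normalizer_iff.1 (Subgroup.inv_mem _ g.2)) y
        simpa using this.1 hy
      have h2 := hx _ h1
      calc y * (g * x * (g : G)⁻¹) = g * (((g : G)⁻¹ * y * g) * x) * (g : G)⁻¹ := by group
        _ = g * (x * ((g : G)⁻¹ * y * g)) * (g : G)⁻¹ := by rw [h2]
        _ = (g * x * (g : G)⁻¹) * y := by group
    obtain ⟨c, hc, s, hs, he⟩ := sup_sylow ((Subgroup.centralizer (P : Set G)).subgroupOf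
      (Subgroup.normalizer (P : Set G))) (by
        intro x hx
        exact hcent P P.2 hP0 x x.2 (by rwa [Subgroup.orderOf_coe]))
      (P.subtype Subgroup.le_normalizer) ⟨g, hg⟩
    exact ⟨s, hs, c, hc, congrArg Subtype.val he⟩
  have hfoc : (P : Subgroup G).focalSubgroupOf ≤ commutator P := by
    have h1 : (P : Subgroup G).focalSubgroup ≤ ⁅(P : Subgroup G), (P : Subgroup G)⁆ := by
      rw [Subgroup.focalSubgroup_def, Subgroup.closure_le]
      rintro _ ⟨hgP, x, hx, u, rfl⟩
      have hy : u * x⁻¹ * u⁻¹ ∈ (P : Subgroup G) := by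
        have := P.mul_mem (P.inv_mem hx) hgP
        simpa [commutatorElement_def, mul_assoc] using this
      obtain ⟨c, hc, hcu⟩ := fusion hcent _ (u • P) P rfl
      rw [← mul_smul, Sylow.smul_eq_iff_mem_normalizer] at hcu
      obtain ⟨s, hs, d, hd, he⟩ := hNP _ ((Subgroup.normalizer (P : Set G)).inv_mem hcu)
      have hyu : u * x⁻¹ * u⁻¹ ∈ (((u • P : Sylow p G) : Subgroup G) ⊓ P : Subgroup G) := by
        refine ⟨?_, hy⟩
        show u * x⁻¹ * u⁻¹ ∈ ((u • P : Sylow p G) : Set G)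
        rw [Sylow.coe_smul, Set.mem_smul_set_iff_inv_smul_mem]
        have : (MulAut.conj u)⁻¹ • (u * x⁻¹ * u⁻¹) = x⁻¹ := by
          rw [← map_inv, MulAut.smul_def, MulAut.conj_apply]; group
        rw [this]; exact P.inv_mem hx
      have e1 := Subgroup.mem_centralizer_iff.1 hc _ hyu
      have e2 := Subgroup.mem_centralizer_iff.1 hd _ (P.inv_mem hx)
      have hcu2 : c * u = s⁻¹ * d⁻¹ := by rw [← inv_inj, he]; group
      have e3 : u * x⁻¹ * u⁻¹ = s⁻¹ * x⁻¹ * s := by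
        calc u * x⁻¹ * u⁻¹ = c * (u * x⁻¹ * u⁻¹) * c⁻¹ := by rw [← e1]; group
          _ = (c * u) * x⁻¹ * (c * u)⁻¹ := by group
          _ = s⁻¹ * (d⁻¹ * (x⁻¹ * d)) * s := by rw [hcu2]; group
          _ = _ := by rw [e2]; group
      have e4 : ⁅x, u⁆ = ⁅x, s⁻¹⁆ := by
        rw [commutatorElement_def, commutatorElement_def, inv_inv]
        calc x * u * x⁻¹ * u⁻¹ = x * (u * x⁻¹ * u⁻¹) := by group
          _ = _ := by rw [e3]; group
      rw [e4]
      exact Subgroup.commutator_mem_commutator hx (P.inv_mem hs)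
    intro y hy
    have h2 := h1 hy
    rw [← Subgroup.map_subtype_commutator] at h2
    obtain ⟨z, hz, hzy⟩ := h2
    have : z = y := by ext; exact hzy
    rwa [← this]
  have hlt : commutator P < ⊤ := Group.IsSolvable.commutator_lt_top_of_nontrivial P
  have hidx : (P : Subgroup G).transferFocal.ker.index = (P : Subgroup G).focalSubgroupOf.index :=
    Nat.card_congr (Subgroup.transferFocal.quotientKerMulEquivQuotientFocalSubroupOf P).toEquiv
  refine ⟨(P : Subgroup G).transferFocal.ker, inferInstance, ?_, ?_⟩
  · intro hT
    rw [hT, Subgroup.index_top] at hidx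
    have := Subgroup.index_eq_one.1 hidx.symm
    rw [this] at hfoc
    exact absurd hlt (not_lt_of_ge hfoc)
  · rw [hidx]
    exact P.2.index _


universe u

theorem ss_surj {G H : Type*} [Group G] [Group H] [Finite G] [Finite H] (f : G →* H)
    (hf : Function.Surjective f) (h : IsSupersoluble G) : IsSupersoluble H :=
  ss_of_ssa (ssa_surj f hf (ssa_of_ss h))

theorem char_map {G : Type*} [Group G] [Finite G] {r : ℕ} (hr : r.Prime) (S : Subgroup G)
    (hS : S.Normal) (Q : Subgroup S) (hQn : Q.Normal) (hQ : IsPGroup r Q) (hi : ¬ r ∣ Q.index) :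
    (Q.map S.subtype).Normal := by
  have := Fact.mk hr
  have hc : (hQ.toSylow hi : Subgroup S).Characteristic :=
    Sylow.characteristic_of_normal (hQ.toSylow hi) hQn
  have hc' : Q.Characteristic := hc
  exact ConjAct.normal_of_characteristic_of_normal

theorem claim (n : ℕ) : ∀ (G : Type u) [Group G] [Finite G], Nat.card G = n → Nontrivial G →
    (∀ H : Subgroup G, H ≠ ⊤ → IsSupersoluble H) →
    ∃ r : ℕ, r.Prime ∧ r ∣ Nat.card G ∧ ∃ R : Subgroup G, R.Normal ∧ IsPGroup r R ∧
      ¬ r ∣ R.index := by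
  induction n using Nat.strong_induction_on with
  | _ n ih =>
  intro G _ _ hn hnt h
  have hc1 : Nat.card G ≠ 1 := (Finite.one_lt_card (α := G)).ne'
  have hp : (Nat.card G).minFac.Prime := Nat.minFac_prime hc1
  have hpd : (Nat.card G).minFac ∣ Nat.card G := Nat.minFac_dvd _
  have hmin : ∀ q : ℕ, q.Prime → q ∣ Nat.card G → (Nat.card G).minFac ≤ q :=
    fun q hq hd => Nat.minFac_le_of_dvd hq.two_le hd
  generalize (Nat.card G).minFac = p at hp hpd hmin
  have hpf := Fact.mk hp
  have htop : IsPGroup p (⊤ : Subgroup G) → ∃ r : ℕ, r.Prime ∧ r ∣ Nat.card G ∧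
      ∃ R : Subgroup G, R.Normal ∧ IsPGroup r R ∧ ¬ r ∣ R.index := fun ht =>
    ⟨p, hp, hpd, ⊤, inferInstance, ht, by rw [Subgroup.index_top]; exact hp.not_dvd_one⟩
  by_cases hU : ∃ U : Subgroup G, U.Normal ∧ IsPGroup p U ∧ U ≠ ⊥
  · obtain ⟨U, hUn, hUp, hU0⟩ := hU
    by_cases hUt : U = ⊤
    · subst hUt; exact htop hUp
    have hlt : Nat.card (G ⧸ U) < n := by
      rw [← hn, U.card_eq_card_quotient_mul_card_subgroup]
      have : 1 < Nat.card U := (Subgroup.one_lt_card_iff_ne_bot U).2 hU0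
      have : 0 < Nat.card (G ⧸ U) := Nat.card_pos
      nlinarith
    have hnt' : Nontrivial (G ⧸ U) := QuotientGroup.nontrivial_iff.2 hUt
    have hs := QuotientGroup.mk'_surjective U
    obtain ⟨r, hr, hrd, R, hRn, hR, hRi⟩ := ih _ hlt (G ⧸ U) rfl hnt' (by
      intro H hH
      have h1 : H.comap (QuotientGroup.mk' U) ≠ ⊤ := by
        intro h2
        apply hH
        rw [← Subgroup.map_comap_eq_self_of_surjective hs H, h2, Subgroup.map_top_of_surjective _ hs]
      exact ss_surj ((QuotientGroup.mk' U).subgroupComap H)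
        (MonoidHom.subgroupComap_surjective_of_surjective _ _ hs) (h _ h1))
    have hrG : r ∣ Nat.card G := by
      rw [U.card_eq_card_quotient_mul_card_subgroup]; exact hrd.mul_right _
    have hSi : (R.comap (QuotientGroup.mk' U)).index = R.index :=
      Subgroup.index_comap_of_surjective _ hs
    have hUS : U ≤ R.comap (QuotientGroup.mk' U) := by
      conv_lhs => rw [← QuotientGroup.ker_mk' U]
      exact MonoidHom.ker_le_comap _ _
    by_cases hrp : r = p
    · subst hrp
      refine ⟨r, hr, hrG, R.comap (QuotientGroup.mk' U), inferInstance, ?_, by rwa [hSi]⟩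
      apply IsPGroup.comap_of_ker_isPGroup hR
      rwa [QuotientGroup.ker_mk']
    have hrf := Fact.mk hr
    by_cases hRt : R = ⊤
    · subst hRt
      refine ⟨p, hp, hpd, U, hUn, hUp, ?_⟩
      obtain ⟨k, hk⟩ := IsPGroup.iff_card.1 hR
      rw [Subgroup.card_top] at hk
      rw [Subgroup.index_eq_card, hk]
      intro hd
      exact hrp ((Nat.prime_dvd_prime_iff_eq hp hr).1 (hp.dvd_of_dvd_pow hd)).symm
    have hSt : R.comap (QuotientGroup.mk' U) ≠ ⊤ := by
      intro h2
      apply hRt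
      rw [← Subgroup.map_comap_eq_self_of_surjective hs R, h2, Subgroup.map_top_of_surjective _ hs]
    have hSn : (R.comap (QuotientGroup.mk' U)).Normal := inferInstance
    have hSs := h _ hSt
    have hfs : Function.Surjective ((QuotientGroup.mk' U).subgroupComap R) :=
      MonoidHom.subgroupComap_surjective_of_surjective _ _ hs
    have Q : Sylow r (R.comap (QuotientGroup.mk' U)) := default
    have hQt : (Q : Subgroup (R.comap (QuotientGroup.mk' U))).map
        ((QuotientGroup.mk' U).subgroupComap R) = ⊤ := by
      have := ((Q.mapSurjective hfs).3 (Q := ⊤) (hR.to_subgroup ⊤) le_top).symm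
      rwa [Sylow.coe_mapSurjective] at this
    have hQn : (Q : Subgroup (R.comap (QuotientGroup.mk' U))).Normal := by
      refine ⟨fun x hx g => ?_⟩
      have hg : (QuotientGroup.mk' U).subgroupComap R g ∈
        (Q : Subgroup (R.comap (QuotientGroup.mk' U))).map
        ((QuotientGroup.mk' U).subgroupComap R) := by rw [hQt]; trivial
      obtain ⟨s, hsQ, he⟩ := hg
      have he' : (QuotientGroup.mk (s : G) : G ⧸ U) = QuotientGroup.mk (g : G) :=
        congrArg Subtype.val he
      have hu : (s : G)⁻¹ * g ∈ U := QuotientGroup.eq.1 he'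
      have hord : (orderOf (x : G)).Coprime p := by
        obtain ⟨k, hk⟩ := IsPGroup.iff_orderOf.1 Q.2 ⟨x, hx⟩
        rw [Subgroup.orderOf_mk] at hk
        rw [Subgroup.orderOf_coe, hk]
        exact Nat.Coprime.pow_left k ((Nat.coprime_primes hr hp).2 hrp)
      have hcx := cent_of_min hp hmin _ U hSs hUS (hUn.subgroupOf _) hUp x x.2 hord
      rw [Subgroup.mem_centralizer_iff] at hcx
      have hcx' := hcx _ hu
      have : g * x * g⁻¹ = s * x * s⁻¹ := by
        apply Subtype.ext
        push_cast
        calc (g : G) * x * (g : G)⁻¹ = s * (((s : G)⁻¹ * g) * x) * (g : G)⁻¹ := by group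
          _ = s * (x * ((s : G)⁻¹ * g)) * (g : G)⁻¹ := by rw [hcx']
          _ = _ := by group
      rw [this]
      exact Subgroup.mul_mem _ (Subgroup.mul_mem _ hsQ hx) (Subgroup.inv_mem _ hsQ)
    refine ⟨r, hr, hrG, _, char_map hr _ hSn Q hQn Q.2 Q.not_dvd_index, Q.2.map _, ?_⟩
    rw [Subgroup.index_map_subtype, hSi]
    exact hr.not_dvd_mul Q.not_dvd_index hRi
  · have hU' : ∀ U : Subgroup G, U.Normal → IsPGroup p U → U = ⊥ := by
      intro U h1 h2
      by_contra h3
      exact hU ⟨U, h1, h2, h3⟩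
    obtain ⟨N, hN, hNt, k, hk⟩ := exists_normal_p_index (p := p) hpd (by
      intro D hD hD0 x hx ho
      have hne : Subgroup.normalizer (D : Set G) ≠ ⊤ := by
        intro ht
        exact hD0 (hU' D (Subgroup.normalizer_eq_top_iff.1 ht) hD)
      exact cent_of_min hp hmin _ D (h _ hne) Subgroup.le_normalizer
        Subgroup.normal_in_normalizer hD x hx ho)
    by_cases hNb : N = ⊥
    · subst hNb
      apply htop
      rw [Subgroup.index_bot] at hk
      exact IsPGroup.iff_card.2 ⟨k, by rw [Subgroup.card_top, hk]⟩
    have hlt : Nat.card N < n := by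
      rw [← hn]
      refine lt_of_le_of_ne (Subgroup.card_le_card_group N) fun he => hNt ?_
      exact Subgroup.eq_top_of_card_eq N he
    have hnt' : Nontrivial N := (Subgroup.nontrivial_iff_ne_bot N).2 hNb
    obtain ⟨r, hr, hrd, R, hRn, hR, hRi⟩ := ih _ hlt N rfl hnt' (by
      intro H hH
      have h1 : H.map N.subtype ≠ ⊤ := by
        intro h2
        apply hNt
        rw [eq_top_iff, ← h2]
        exact Subgroup.map_subtype_le H
      let e := H.equivMapOfInjective N.subtype N.subtype_injective
      exact ss_surj e.symm.toMonoidHom e.symm.surjective (h _ h1))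
    have hM := char_map hr N hN R hRn hR hRi
    refine ⟨r, hr, hrd.trans (Subgroup.card_subgroup_dvd_card N), _, hM, hR.map _, ?_⟩
    rw [Subgroup.index_map_subtype, hk]
    refine hr.not_dvd_mul hRi fun hd => ?_
    have hrp := (Nat.prime_dvd_prime_iff_eq hr hp).1 (hr.dvd_of_dvd_pow hd)
    subst hrp
    have h4 := hU' _ hM (hR.map _)
    have h5 : R = ⊥ := (Subgroup.map_eq_bot_iff_of_injective _ N.subtype_injective).1 h4
    rw [h5, Subgroup.index_bot] at hRi
    exact hRi hrd

theorem final (G : Type*) [Group G] [Finite G] (h : IsMinimalNonsupersoluble G) :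
    ∃ p : ℕ, p.Prime ∧ p ∣ Nat.card G ∧ IsSylowSubgroup p (ssResidual G) ∧
      (ssResidual G).Normal ∧
      ∀ (q : ℕ) (H : Subgroup G), q.Prime → q ∣ Nat.card G →
        IsSylowSubgroup q H → H.Normal → H = ssResidual G := by
  obtain ⟨h1, h2⟩ := h
  have hnt : Nontrivial G := by
    by_contra hn
    rw [not_nontrivial_iff_subsingleton] at hn
    apply h1
    apply ss_of_ssa
    intro N L _ _ _ hNL
    exact absurd (Subsingleton.elim N L) hNL.ne
  obtain ⟨p, hp, hpd, P, hPn, hP, hPi⟩ := claim _ G rfl hnt h2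
  have hpf := Fact.mk hp
  have hne : ∀ (q : ℕ) (H : Subgroup G), q ∣ Nat.card G → ¬ q ∣ H.index → H ≠ ⊥ := by
    rintro q H h3 h4 rfl
    rw [Subgroup.index_bot] at h4
    exact h4 h3
  have hP0 := hne p P hpd hPi
  have hSP := stepB h2 hp P hPn hP hPi hP0
  have key : ∀ N : Subgroup G, N.Normal → SSA N → P ≤ N := by
    intro N hN hs
    by_contra hle
    have hlt : N ⊓ P < P := lt_of_le_of_ne inf_le_right (fun he => hle (inf_eq_right.1 he))
    exact h1 (ss_of_ssa (stepC h2 hp P hPn hP hPi (N ⊓ P) inferInstance hlt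
      (ssa_inf N P hN hPn hs hSP)))
  have hres : ssResidual G = P := by
    apply le_antisymm
    · exact iInf₂_le P ⟨hPn, ss_of_ssa ((ssa_quot P).2 hSP)⟩
    · refine le_iInf₂ ?_
      rintro N ⟨hN, hs⟩
      exact key N hN ((ssa_quot N).1 (ssa_of_ss hs))
  rw [hres]
  refine ⟨p, hp, hpd, ⟨hP, hPi⟩, hPn, ?_⟩
  rintro q H hq hqd ⟨hH, hHi⟩ hHn
  have hPH := key H hHn (stepB h2 hq H hHn hH hHi (hne q H hqd hHi))
  have hqf := Fact.mk hq
  by_cases hqp : q = p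
  · subst hqp
    exact (hP.toSylow hPi).3 hH hPH
  · have := IsPGroup.disjoint_of_ne p q (Ne.symm hqp) P H hP hH
    exact absurd (disjoint_self.1 (this.mono_right hPH)) hP0

end MNS

/-- In a minimal nonsupersoluble group `G`, the supersoluble residual `G^𝔘` is the unique
normal Sylow subgroup of `G`. -/
theorem minimalNonsupersoluble_ssResidual_unique_normal_sylow
    (G : Type*) [Group G] [Finite G] (h : IsMinimalNonsupersoluble G) :
    ∃ p : ℕ, p.Prime ∧ p ∣ Nat.card G ∧ IsSylowSubgroup p (ssResidual G) ∧
      (ssResidual G).Normal ∧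
      ∀ (q : ℕ) (H : Subgroup G), q.Prime → q ∣ Nat.card G →
        IsSylowSubgroup q H → H.Normal → H = ssResidual G := by
  exact MNS.final G h
end

section
/- Let G be a finite minimal nonsupersoluble group. Then G^𝔘/Φ(G^𝔘) is a noncyclic chief factor of G, where Φ denotes the Frattini subgroup. -/
open Subgroup

/-- One cyclic step. -/
def SStep {G : Type*} [Group G] (A B : Subgroup G) : Prop :=
  A.Normal ∧ B.Normal ∧ ∃ b, B = A ⊔ zpowers b

abbrev SChain {G : Type*} [Group G] (A B : Subgroup G) : Prop :=
  Relation.ReflTransGen SStep A B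

lemma cyc_iff {G : Type*} [Group G] (A B : Subgroup G) [A.Normal] (hAB : A ≤ B) :
    IsCyclic (B ⧸ A.subgroupOf B) ↔ ∃ b, B = A ⊔ zpowers b := by
  constructor
  · rintro ⟨g, hg⟩
    obtain ⟨b, rfl⟩ := QuotientGroup.mk_surjective g
    refine ⟨b, le_antisymm (fun x hx => ?_) (sup_le hAB (by simp [zpowers_le]))⟩
    obtain ⟨k, hk⟩ := hg (QuotientGroup.mk ⟨x, hx⟩)
    have hk' : ((b ^ k : B) : B ⧸ A.subgroupOf B) = ((⟨x, hx⟩ : B) : B ⧸ A.subgroupOf B) := hk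
    rw [QuotientGroup.eq, mem_subgroupOf] at hk'
    have h1 : ((b : G) ^ k)⁻¹ * x ∈ A := by simpa using hk'
    have h2 : x = (b : G) ^ k * (((b : G) ^ k)⁻¹ * x) := by group
    rw [h2]
    exact mul_mem (mem_sup_right (zpow_mem (mem_zpowers _) k)) (mem_sup_left h1)
  · rintro ⟨b, hb⟩
    have hbB : b ∈ B := hb ▸ mem_sup_right (mem_zpowers b)
    refine ⟨QuotientGroup.mk ⟨b, hbB⟩, fun x => ?_⟩
    obtain ⟨⟨x, hx⟩, rfl⟩ := QuotientGroup.mk_surjective x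
    have hx' := hx
    rw [hb, mem_sup_of_normal_left] at hx'
    obtain ⟨a, ha, _, ⟨k, rfl⟩, rfl⟩ := hx'
    refine ⟨k, ?_⟩
    change (((⟨b, hbB⟩ : B) ^ k : B) : B ⧸ A.subgroupOf B) = _
    rw [QuotientGroup.eq, mem_subgroupOf]
    have := ‹A.Normal›.conj_mem a ha (b ^ k)⁻¹
    simpa [mul_assoc] using this

lemma sChain_of_isSupersoluble {G : Type*} [Group G] (h : IsSupersoluble G) :
    SChain (⊥ : Subgroup G) ⊤ := by
  obtain ⟨n, c, hc, h0, hn, hs⟩ := h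
  have : ∀ i : Fin (n + 1), SChain (⊥ : Subgroup G) (c i) := by
    intro i
    induction i using Fin.induction with
    | zero => rw [h0]
    | succ i ih =>
      refine ih.tail ⟨hc _, hc _, ?_⟩
      have := hc i.castSucc
      exact (cyc_iff _ _ (hs i).1).1 (hs i).2
  exact hn ▸ this (Fin.last n)

lemma isSupersoluble_of_sChain {G : Type*} [Group G] (h : SChain (⊥ : Subgroup G) ⊤) :
    IsSupersoluble G := by
  have : ∀ B : Subgroup G, SChain (⊥ : Subgroup G) B → 
     ∃ (n : ℕ) (c : Fin (n + 1) → Subgroup G) (hc : ∀ i, (c i).Normal),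
    c 0 = ⊥ ∧ c (Fin.last n) = B ∧
    ∀ i : Fin n, c i.castSucc ≤ c i.succ ∧
      haveI := (hc i.castSucc).subgroupOf (c i.succ)
      IsCyclic (↥(c i.succ) ⧸ ((c i.castSucc).subgroupOf (c i.succ))) := by
    intro B hB
    induction hB with
    | refl => exact ⟨0, fun _ => ⊥, fun _ => inferInstance, rfl, rfl, fun i => i.elim0⟩
    | @tail A B _ hAB ih =>
      obtain ⟨n, c, hc, h0, hn, hs⟩ := ih
      refine ⟨n + 1, Fin.snoc (α := fun _ => Subgroup G) c B, ?_, ?_, by simp, ?_⟩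
      · intro i
        induction i using Fin.lastCases with
        | last => simpa using hAB.2.1
        | cast i => simpa using hc i
      · have : (0 : Fin (n + 1 + 1)) = Fin.castSucc 0 := rfl
        rw [this, Fin.snoc_castSucc, h0]
      · have aux : ∀ (X Y A' B' : Subgroup G) (hX : X.Normal) (hA' : A'.Normal), X = A' → Y = B' →
            (A' ≤ B' ∧ IsCyclic (B' ⧸ A'.subgroupOf B')) →
            (X ≤ Y ∧ IsCyclic (Y ⧸ X.subgroupOf Y)) := by
          intro X Y A' B' hX hA' h1 h2 h3
          subst h1; subst h2; exact h3
        intro i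
        induction i using Fin.lastCases with
        | last =>
          have hle : A ≤ B := by obtain ⟨b, hb⟩ := hAB.2.2; rw [hb]; exact le_sup_left
          have := hAB.1
          have key := (cyc_iff A B hle).2 hAB.2.2
          refine aux _ _ A B ?_ hAB.1 ?_ ?_ ⟨hle, key⟩
          · rw [Fin.snoc_castSucc, hn]; exact this
          · rw [Fin.snoc_castSucc, hn]
          · rw [Fin.succ_last, Fin.snoc_last]
        | cast i =>
          have h1 : Fin.snoc (α := fun _ => Subgroup G) c B i.castSucc.succ = c i.succ := by
            rw [← Fin.castSucc_succ, Fin.snoc_castSucc]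
          refine aux _ _ (c i.castSucc) (c i.succ) ?_ (hc _) ?_ h1 (hs i)
          · rw [Fin.snoc_castSucc]; exact hc _
          · rw [Fin.snoc_castSucc]
  exact this ⊤ h

lemma sChain_map {G G' : Type*} [Group G] [Group G'] {f : G →* G'} (hf : Function.Surjective f)
    {A B : Subgroup G} (h : SChain A B) : SChain (A.map f) (B.map f) := by
  refine Relation.ReflTransGen.lift (p := SStep) (fun A : Subgroup G => A.map f) ?_ _ _ h
  rintro A B ⟨hA, hB, b, rfl⟩
  exact ⟨hA.map f hf, hB.map f hf, f b, by beta_reduce; rw [Subgroup.map_sup, MonoidHom.map_zpowers]⟩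

lemma sChain_comap {G G' : Type*} [Group G] [Group G'] {f : G →* G'} (hf : Function.Surjective f)
    {A B : Subgroup G'} (h : SChain A B) : SChain (A.comap f) (B.comap f) := by
  refine Relation.ReflTransGen.lift (p := SStep) (fun A : Subgroup G' => A.comap f) ?_ _ _ h
  rintro A B ⟨hA, hB, b, rfl⟩
  obtain ⟨b, rfl⟩ := hf b
  refine ⟨hA.comap f, hB.comap f, b, ?_⟩
  change comap f (A ⊔ zpowers (f b)) = comap f A ⊔ zpowers b
  rw [← MonoidHom.map_zpowers, ← comap_map_eq_self (H := comap f A ⊔ zpowers b) (f := f)]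
  · rw [Subgroup.map_sup, map_comap_eq_self_of_surjective hf]
  · exact le_trans (fun x hx => by rw [MonoidHom.mem_ker] at hx; simp [mem_comap, hx, one_mem]) le_sup_left

lemma ss_map {G G' : Type*} [Group G] [Group G'] {f : G →* G'} (hf : Function.Surjective f)
    (h : IsSupersoluble G) : IsSupersoluble G' := by
  have := sChain_map hf (sChain_of_isSupersoluble h)
  rw [Subgroup.map_bot, Subgroup.map_top_of_surjective f hf] at this
  exact isSupersoluble_of_sChain this

lemma sChain_of_quot {G : Type*} [Group G] {N : Subgroup G} [N.Normal]
    (h : IsSupersoluble (G ⧸ N)) : SChain N ⊤ := by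
  have := sChain_comap (QuotientGroup.mk'_surjective N) (sChain_of_isSupersoluble h)
  rwa [MonoidHom.comap_bot, QuotientGroup.ker_mk', comap_top] at this

lemma quot_of_sChain {G : Type*} [Group G] {N : Subgroup G} [N.Normal]
    (h : SChain N ⊤) : IsSupersoluble (G ⧸ N) := by
  have := sChain_map (QuotientGroup.mk'_surjective N) h
  rw [Subgroup.map_top_of_surjective _ (QuotientGroup.mk'_surjective N)] at this
  rw [show map (QuotientGroup.mk' N) N = ⊥ by simp] at this
  exact isSupersoluble_of_sChain this

/-- chief factors of supersoluble groups are cyclic -/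
lemma chief_cyclic {G : Type*} [Group G] {N : Subgroup G} (h : SChain N ⊤)
    {A B : Subgroup G} (hA : A.Normal) (hB : B.Normal) (hBA : B ≤ A) (hne : B ≠ A)
    (hN : N ⊓ A ≤ B) (hmin : ∀ M : Subgroup G, M.Normal → B ≤ M → M ≤ A → M = B ∨ M = A) :
    ∃ a, A = B ⊔ zpowers a := by
  by_contra hcon
  have key : ∀ C : Subgroup G, SChain N C → C ⊓ A ≤ B := by
    intro C hC
    induction hC with
    | refl => exact hN
    | @tail C D _ hCD ih =>
      obtain ⟨hC, hD, d, hd⟩ := hCD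
      rcases hmin (B ⊔ (D ⊓ A)) inferInstance le_sup_left (sup_le hBA inf_le_right) with h1 | h1
      · rw [← h1]; exact le_sup_right
      exfalso
      -- D ⊓ A modulo C ⊓ A is cyclic
      have hcyc : IsCyclic (D ⧸ C.subgroupOf D) :=
        (cyc_iff C D (hd ▸ le_sup_left)).2 ⟨d, hd⟩
      have : IsCyclic ((((D ⊓ A).subgroupOf D).map (QuotientGroup.mk' (C.subgroupOf D)))) :=
        inferInstance
      obtain ⟨⟨g, hg0⟩, hg⟩ := this
      obtain ⟨⟨a, haD⟩, ha, rfl⟩ := hg0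
      have haA : a ∈ A := (mem_subgroupOf.1 ha).2
      apply hcon
      refine ⟨a, le_antisymm ?_ (sup_le hBA (by simpa [zpowers_le] using haA))⟩
      conv_lhs => rw [← h1]
      refine sup_le le_sup_left fun x hx => ?_
      obtain ⟨k, hk⟩ := hg ⟨QuotientGroup.mk ⟨x, hx.1⟩, ⟨⟨x, hx.1⟩, mem_subgroupOf.2 hx, rfl⟩⟩
      have hk' : (((⟨a, haD⟩ : D) ^ k : D) : D ⧸ C.subgroupOf D) =
        ((⟨x, hx.1⟩ : D) : D ⧸ C.subgroupOf D) := congrArg Subtype.val hk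
      rw [QuotientGroup.eq, mem_subgroupOf] at hk'
      have h1 : (a ^ k)⁻¹ * x ∈ C := by simpa using hk'
      have h2 : (a ^ k)⁻¹ * x ∈ B := ih ⟨h1, A.mul_mem (A.inv_mem (A.zpow_mem haA k)) hx.2⟩
      have h3 : x = a ^ k * ((a ^ k)⁻¹ * x) := by group
      rw [h3]
      exact mul_mem (mem_sup_right (zpow_mem (mem_zpowers _) k)) (mem_sup_left h2)
  have := key ⊤ h
  rw [top_inf_eq] at this
  exact hne (le_antisymm hBA this)

lemma exists_minimal_normal {G : Type*} [Group G] [Finite G] {A : Subgroup G} (hA : A.Normal)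
    (hne : A ≠ ⊥) : ∃ V : Subgroup G, V.Normal ∧ V ≤ A ∧ V ≠ ⊥ ∧
      ∀ M : Subgroup G, M.Normal → M ≤ V → M = ⊥ ∨ M = V := by
  obtain ⟨V, hV⟩ := Set.Finite.exists_minimal (s := {V : Subgroup G | V.Normal ∧ V ≤ A ∧ V ≠ ⊥})
    (Set.toFinite _) ⟨A, hA, le_rfl, hne⟩
  refine ⟨V, hV.1.1, hV.1.2.1, hV.1.2.2, fun M hM hMV => ?_⟩
  by_cases h : M = ⊥
  · exact Or.inl h
  · exact Or.inr (le_antisymm hMV (hV.2 ⟨hM, hMV.trans hV.1.2.1, h⟩ hMV))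

/-- a supersoluble group has a normal subgroup of prime order inside any nontrivial normal
subgroup. -/
lemma exists_prime_normal {G : Type*} [Group G] [Finite G] (h : IsSupersoluble G)
    {A : Subgroup G} (hA : A.Normal) (hne : A ≠ ⊥) :
    ∃ L : Subgroup G, L.Normal ∧ L ≤ A ∧ (Nat.card L).Prime := by
  obtain ⟨V, hV, hVA, hV1, hmin⟩ := exists_minimal_normal hA hne
  obtain ⟨a, ha⟩ := chief_cyclic (sChain_of_isSupersoluble h) hV (B := ⊥) inferInstance bot_le
    hV1.symm inf_le_left (fun M hM _ h2 => hmin M hM h2)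
  rw [bot_sup_eq] at ha
  have ha1 : orderOf a ≠ 1 := by
    rw [Ne, orderOf_eq_one_iff]; rintro rfl; simp at ha; exact hV1 ha
  obtain ⟨p, hp, hpa⟩ := Nat.exists_prime_and_dvd ha1
  have haV : a ∈ V := ha ▸ mem_zpowers a
  refine ⟨zpowers (a ^ (orderOf a / p)), ⟨?_⟩, ?_, ?_⟩
  · rintro _ ⟨k, rfl⟩ g
    have : g * a * g⁻¹ ∈ zpowers a := ha ▸ hV.conj_mem a haV g
    obtain ⟨m, hm⟩ := this
    refine ⟨m * k, ?_⟩
    simp only at hm ⊢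
    rw [← conj_zpow, ← conj_pow, ← hm, ← zpow_natCast, ← zpow_natCast, ← zpow_mul, ← zpow_mul, ← zpow_mul]
    congr 1; ring
  · rw [zpowers_le]; exact hVA (pow_mem haV _)
  · rw [Nat.card_zpowers, orderOf_pow_orderOf_div (orderOf_pos a).ne' hpa]; exact hp


lemma mem_of_pow_coprime {G : Type*} [Group G] {K : Subgroup G} {x : G} {m n : ℕ}
    (h : Nat.Coprime m n) (hm : x ^ m ∈ K) (hn : x ^ n ∈ K) : x ∈ K := by
  have h1 : x = (x ^ m) ^ (Nat.gcdA m n) * (x ^ n) ^ (Nat.gcdB m n) := by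
    rw [← zpow_natCast, ← zpow_natCast, ← zpow_mul, ← zpow_mul, ← zpow_add, ← Nat.gcd_eq_gcd_ab,
      h.gcd_eq_one]
    simp
  rw [h1]
  exact K.mul_mem (K.zpow_mem hm _) (K.zpow_mem hn _)

lemma hall_normal {G : Type*} [Group G] {K N : Subgroup G} (hN : N.Normal)
    (hKN : K ≤ N) (hK : (K.subgroupOf N).Normal) (hco : Nat.Coprime (Nat.card K) (K.relIndex N)) :
    K.Normal := by
  refine ⟨fun x hx g => ?_⟩
  have hy : g * x * g⁻¹ ∈ N := hN.conj_mem x (hKN hx) g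
  refine mem_of_pow_coprime hco ?_ ?_
  · rw [conj_pow]
    have : x ^ Nat.card K = 1 := by
      exact congrArg Subtype.val (pow_card_eq_one' (x := (⟨x, hx⟩ : K)))
    rw [this]; simp
  · have := (K.subgroupOf N).pow_index_mem ⟨_, hy⟩
    rw [mem_subgroupOf] at this
    exact this

lemma central_of_prime {G : Type*} [Group G] [Finite G] {L : Subgroup G} [hL : L.Normal] 
    (hp : (Nat.card L).Prime) : ∃ f : G →* (ZMod (Nat.card L))ˣ, 
      ∀ g, f g = 1 → ∀ l ∈ L, g * l = l * g := by
  have : Fact (Nat.card L).Prime := ⟨hp⟩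
  have : IsCyclic L := isCyclic_of_prime_card (p := Nat.card L) rfl
  refine ⟨(IsCyclic.mulAutMulEquiv L).toMonoidHom.comp MulAut.conjNormal, fun g hg l hl => ?_⟩
  have h1 : MulAut.conjNormal (H := L) g = 1 := by
    apply (IsCyclic.mulAutMulEquiv L).injective
    rw [map_one]
    exact hg
  have h2 := congrArg Subtype.val (DFunLike.congr_fun h1 ⟨l, hl⟩)
  rw [MulAut.conjNormal_apply] at h2
  simp only [MulAut.one_apply] at h2
  exact mul_inv_eq_iff_eq_mul.1 h2

lemma card_units_prime {r : ℕ} (hr : r.Prime) : Nat.card (ZMod r)ˣ = r - 1 := by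
  have : Fact r.Prime := ⟨hr⟩
  rw [Nat.card_eq_fintype_card, ZMod.card_units_eq_totient, Nat.totient_prime hr]

lemma central_compl {N : Type*} [Group N] [Finite N] {L : Subgroup N} [L.Normal]
    (hc : ∀ g : N, ∀ l ∈ L, g * l = l * g) (hco : Nat.Coprime (Nat.card L) L.index) :
    ∃ K : Subgroup N, K.Normal ∧ Nat.card K = L.index ∧ K.index = Nat.card L := by
  obtain ⟨K, hK⟩ := Subgroup.exists_right_complement'_of_coprime hco
  refine ⟨K, ⟨fun k hk g => ?_⟩, hK.symm.index_eq_card ▸ rfl, hK.index_eq_card⟩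
  obtain ⟨⟨l, k'⟩, hlk⟩ := hK.2 g
  have : g = l.1 * k'.1 := hlk.symm
  have h2 : g * k * g⁻¹ = k'.1 * k * k'.1⁻¹ := by
    rw [this, mul_inv_rev, show (l.1 * k'.1 * k * (k'.1⁻¹ * l.1⁻¹) : N) = l.1 * (k'.1 * k * k'.1⁻¹) * l.1⁻¹ by group,
      ← hc _ _ l.2]
    group
  rw [h2]
  exact K.mul_mem (K.mul_mem k'.2 hk) (K.inv_mem k'.2)

lemma ore_aux (n m : ℕ) : ∀ (G : Type*) [Group G] [Finite G], Nat.card G = m → 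
    IsSupersoluble G → ∃ N : Subgroup G, N.Normal ∧
    (∀ r : ℕ, r.Prime → r ∣ Nat.card N → n ≤ r) ∧ (∀ r : ℕ, r.Prime → r ∣ N.index → r < n) := by
  induction m using Nat.strong_induction_on with
  | _ m ih =>
  intro G _ _ hG hs
  by_cases htriv : (⊤ : Subgroup G) = ⊥
  · refine ⟨⊥, inferInstance, fun r hr hd => ?_, fun r hr hd => ?_⟩
    · simp at hd; exact absurd hd hr.one_lt.ne'
    · rw [← htriv] at hd; simp at hd; exact absurd hd hr.one_lt.ne'
  obtain ⟨L, hL, -, hLp⟩ := exists_prime_normal hs (A := ⊤) inferInstance htriv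
  have hcard : Nat.card G = Nat.card (G ⧸ L) * Nat.card L := card_eq_card_quotient_mul_card_subgroup L
  obtain ⟨N', hN', h1, h2⟩ := ih (Nat.card (G ⧸ L)) (by
    rw [← hG, hcard]; exact lt_mul_of_one_lt_right Nat.card_pos hLp.one_lt) (G ⧸ L) rfl
    (ss_map (QuotientGroup.mk'_surjective L) hs)
  set N := N'.comap (QuotientGroup.mk' L) with hNdef
  have hN : N.Normal := hN'.comap _
  have hind : N.index = N'.index := index_comap_of_surjective _ (QuotientGroup.mk'_surjective L)
  have hcN : Nat.card N = Nat.card N' * Nat.card L := by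
    have e1 := N.card_mul_index
    have e2 := N'.card_mul_index
    rw [hcard, ← e2, hind] at e1
    have : 0 < N'.index := Nat.pos_of_ne_zero N'.index_ne_zero_of_finite
    refine Nat.eq_of_mul_eq_mul_right this ?_
    rw [e1]; ring
  by_cases hr : n ≤ Nat.card L
  · refine ⟨N, hN, fun r hr' hd => ?_, fun r hr' hd => h2 r hr' (hind ▸ hd)⟩
    rw [hcN] at hd
    rcases (Nat.Prime.dvd_mul hr').1 hd with h | h
    · exact h1 r hr' h
    · rwa [(Nat.prime_dvd_prime_iff_eq hr' hLp).1 h]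
  push Not at hr
  have hLN : L ≤ N := by
    intro x hx
    rw [hNdef, mem_comap, QuotientGroup.mk'_apply, (QuotientGroup.eq_one_iff x).2 hx]
    exact one_mem _
  obtain ⟨f, hf⟩ := central_of_prime hLp
  have hcen : ∀ g ∈ N, ∀ l ∈ L, g * l = l * g := by
    intro g hg
    apply hf
    rw [← orderOf_eq_one_iff]
    by_contra hne
    obtain ⟨s, hs, hsd⟩ := Nat.exists_prime_and_dvd hne
    have : Fact (Nat.card L).Prime := ⟨hLp⟩
    have h3 : s ∣ Nat.card L - 1 := by
      refine hsd.trans ((_root_.orderOf_dvd_natCard _).trans ?_)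
      rw [card_units_prime hLp]
    have h4 : s < Nat.card L := by
      have := Nat.le_of_dvd (by have := hLp.two_le; omega) h3
      have := hLp.two_le; omega
    have h5 : s ∣ Nat.card N := by
      refine hsd.trans ((orderOf_map_dvd f g).trans ?_)
      exact Subgroup.orderOf_dvd_natCard N hg
    rw [hcN] at h5
    rcases (Nat.Prime.dvd_mul hs).1 h5 with h | h
    · have := h1 s hs h; omega
    · rw [(Nat.prime_dvd_prime_iff_eq hs hLp).1 h] at h4; omega
  have hL' : Nat.card (L.subgroupOf N) = Nat.card L := Nat.card_congr (subgroupOfEquivOfLe hLN).toEquiv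
  have hLi : (L.subgroupOf N).index = Nat.card N' := by
    have := (L.subgroupOf N).card_mul_index
    rw [hL', hcN, mul_comm] at this
    exact Nat.eq_of_mul_eq_mul_right hLp.pos this
  have hco : Nat.Coprime (Nat.card L) (Nat.card N') := by
    rw [hLp.coprime_iff_not_dvd]
    intro h; have := h1 _ hLp h; omega
  obtain ⟨K', hK', hcK, hiK⟩ := central_compl (L := L.subgroupOf N)
    (fun g l hl => Subtype.ext (hcen g.1 g.2 l.1 (mem_subgroupOf.1 hl))) (by rw [hL', hLi]; exact hco)
  rw [hLi] at hcK; rw [hL'] at hiK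
  have hKN : K'.map N.subtype ≤ N := map_subtype_le K'
  have hsub : (K'.map N.subtype).subgroupOf N = K' := by
    rw [subgroupOf, comap_map_eq_self_of_injective N.subtype_injective]
  have hcK2 : Nat.card (K'.map N.subtype) = Nat.card N' := by
    rw [card_map_of_injective N.subtype_injective, hcK]
  have hrel : (K'.map N.subtype).relIndex N = Nat.card L := by
    rw [relIndex, hsub, hiK]
  refine ⟨K'.map N.subtype, hall_normal hN hKN (by rw [hsub]; exact hK') ?_, ?_, ?_⟩
  · rw [hcK2, hrel]; exact hco.symm
  · rw [hcK2]; exact h1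
  · intro r hr' hd
    rw [← relIndex_mul_index hKN, hrel, hind] at hd
    rcases (Nat.Prime.dvd_mul hr').1 hd with h | h
    · rwa [(Nat.prime_dvd_prime_iff_eq hr' hLp).1 h]
    · exact h2 r hr' h

lemma ore (n : ℕ) {G : Type*} [Group G] [Finite G] (h : IsSupersoluble G) :
    ∃ N : Subgroup G, N.Normal ∧
    (∀ r : ℕ, r.Prime → r ∣ Nat.card N → n ≤ r) ∧ (∀ r : ℕ, r.Prime → r ∣ N.index → r < n) :=
  ore_aux n _ G rfl h

/-- coprime action -/
lemma coprime_act {G : Type*} [Group G] [Finite G] {p : ℕ} {Y : Subgroup G}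
    (hY : IsPGroup p Y) {h y : G} (ho : Nat.Coprime (orderOf h) p)
    (h1 : h * y * h⁻¹ * y⁻¹ ∈ Y) (h2 : ∀ z ∈ Y, h * z = z * h) : h * y = y * h := by
  set z := h * y * h⁻¹ * y⁻¹ with hz
  have hc := h2 z h1
  have e1 : h * y * h⁻¹ = z * y := by rw [hz]; group
  have e2 : ∀ n : ℕ, h ^ n * y * (h ^ n)⁻¹ = z ^ n * y := by
    intro n
    induction n with
    | zero => simp
    | succ n ih =>
      have hcz : h * z ^ n * h⁻¹ = z ^ n := by
        have : Commute h (z ^ n) := (show Commute h z from hc).pow_right n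
        rw [this.eq]; group
      calc h ^ (n+1) * y * (h ^ (n+1))⁻¹ = h * (h ^ n * y * (h ^ n)⁻¹) * h⁻¹ := by
            rw [pow_succ']; group
        _ = (h * z ^ n * h⁻¹) * (h * y * h⁻¹) := by rw [ih]; group
        _ = _ := by rw [hcz, e1, pow_succ]; group
  have e3 := e2 (orderOf h)
  rw [pow_orderOf_eq_one] at e3
  have e4 : z ^ orderOf h = 1 := by simpa using e3
  obtain ⟨k, hk⟩ := hY ⟨z, h1⟩
  have e5 : z ^ p ^ k = 1 := by simpa using congrArg Subtype.val hk
  have : z ∈ (⊥ : Subgroup G) :=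
    mem_of_pow_coprime (K := ⊥) (ho.pow_right k) (by rw [e4]; exact one_mem _) (by rw [e5]; exact one_mem _)
  rw [mem_bot] at this
  rw [this, one_mul] at e1
  exact mul_inv_eq_iff_eq_mul.1 e1

lemma lemma_S_aux (p m : ℕ) (hp : p.Prime) : ∀ (G : Type*) [Group G] [Finite G], Nat.card G = m → 
    IsSupersoluble G → ∀ Y : Subgroup G, Y.Normal → IsPGroup p Y → ∀ a b h : G, 
    Nat.Coprime (orderOf h) p → (h = a * b * a⁻¹ * b⁻¹ ∨ h = a ^ (p - 1)) → 
    ∀ y ∈ Y, h * y = y * h := by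
  induction m using Nat.strong_induction_on with
  | _ m ih =>
  intro G _ _ hG hs Y hY hYp a b h ho hh y hy
  by_cases htriv : Y = ⊥
  · subst htriv; rw [mem_bot] at hy; simp [hy]
  obtain ⟨L, hL, hLY, hLp⟩ := exists_prime_normal hs hY htriv
  have hcard : Nat.card G = Nat.card (G ⧸ L) * Nat.card L := card_eq_card_quotient_mul_card_subgroup L
  have hLP : IsPGroup p L := hYp.to_le hLY
  have hLpp : Nat.card L = p := by
    have : Fact p.Prime := ⟨hp⟩
    obtain ⟨k, hk⟩ := hLP.exists_card_eq
    have : Nat.card L ∣ p := hLp.dvd_of_dvd_pow hk.dvd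
    exact (Nat.prime_dvd_prime_iff_eq hLp hp).1 this
  obtain ⟨f, hf⟩ := central_of_prime hLp
  have hfL : ∀ l ∈ L, h * l = l * h := by
    apply hf
    rcases hh with rfl | rfl
    · simp [mul_comm (f a)]
    · have : Fact (Nat.card L).Prime := ⟨hLp⟩
      rw [map_pow, ← hLpp]
      have := pow_card_eq_one' (x := f a)
      rwa [card_units_prime hLp] at this
  refine coprime_act hLP ho ?_ hfL
  have := ih (Nat.card (G ⧸ L)) (by
    rw [← hG, hcard]; exact lt_mul_of_one_lt_right Nat.card_pos hLp.one_lt) (G ⧸ L) rfl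
    (ss_map (QuotientGroup.mk'_surjective L) hs) (Y.map (QuotientGroup.mk' L))
    (hY.map _ (QuotientGroup.mk'_surjective L)) (hYp.map _) a b h
    (ho.coprime_dvd_left (orderOf_map_dvd (QuotientGroup.mk' L) h))
    (by rcases hh with rfl | rfl
        · left; rfl
        · right; rfl) y ⟨y, hy, rfl⟩
  rw [← QuotientGroup.eq_one_iff]
  change (h : G ⧸ L) * y * (h : G ⧸ L)⁻¹ * (y : G ⧸ L)⁻¹ = 1
  change (h : G ⧸ L) * y = y * h at this
  rw [this]; group

lemma lemma_S {p : ℕ} (hp : p.Prime) {G : Type*} [Group G] [Finite G]  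
    (hs : IsSupersoluble G) {Y : Subgroup G} (hY : Y.Normal) (hYp : IsPGroup p Y) {a b h : G} 
    (ho : Nat.Coprime (orderOf h) p) (hh : h = a * b * a⁻¹ * b⁻¹ ∨ h = a ^ (p - 1)) : 
    ∀ y ∈ Y, h * y = y * h :=
  lemma_S_aux p _ hp G rfl hs Y hY hYp a b h ho hh


lemma lemma_F {N : Type*} [Group N] [Finite N] {p : ℕ} [Fact p.Prime] {C : Subgroup N} [C.Normal]
    (hC : ∀ n : N, ∃ k : ℕ, n ^ (p ^ k) ∈ C) (Q : Sylow p N) (n : N) :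
    ∃ c ∈ C, ∃ u ∈ (Q : Subgroup N), n = c * u := by
  have h1 : IsPGroup p (N ⧸ C) := by
    intro g
    obtain ⟨g, rfl⟩ := QuotientGroup.mk_surjective g
    obtain ⟨k, hk⟩ := hC g
    exact ⟨k, by rw [← QuotientGroup.mk_pow]; exact (QuotientGroup.eq_one_iff _).2 hk⟩
  obtain ⟨j, hj⟩ := h1.exists_card_eq
  have h2 : (C ⊔ (Q : Subgroup N)).index ∣ p ^ j := hj ▸ index_dvd_of_le le_sup_left
  have h3 : (C ⊔ (Q : Subgroup N)).index ∣ (Q : Subgroup N).index := index_dvd_of_le le_sup_right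
  have h4 : (C ⊔ (Q : Subgroup N)).index = 1 := by
    have := Q.not_dvd_index
    have hco : Nat.Coprime (p ^ j) (Q : Subgroup N).index :=
      Nat.Coprime.pow_left _ ((Fact.out : p.Prime).coprime_iff_not_dvd.2 this)
    exact Nat.eq_one_of_dvd_coprimes hco h2 h3
  rw [index_eq_one] at h4
  have : n ∈ C ⊔ (Q : Subgroup N) := h4 ▸ mem_top n
  rw [mem_sup_of_normal_left] at this
  obtain ⟨c, hc, u, hu, rfl⟩ := this
  exact ⟨c, hc, u, hu, rfl⟩

lemma mem_smul_syl {G : Type*} [Group G] {p : ℕ} {P : Sylow p G} {g y : G} :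
    y ∈ g • P ↔ g⁻¹ * y * g ∈ P := by
  change y ∈ ((g • P : Sylow p G) : Subgroup G) ↔ _
  rw [Sylow.coe_subgroup_smul, Subgroup.mem_pointwise_smul_iff_inv_smul_mem]
  rw [← map_inv, MulAut.smul_def, MulAut.conj_apply, inv_inv]
  rfl

lemma exists_norm_not_mem {G : Type*} [Group G] [Finite G] {p : ℕ} [Fact p.Prime] {D P : Subgroup G}
    (hP : IsPGroup p P) (hD : D < P) : ∃ y ∈ P, y ∉ D ∧ y ∈ normalizer (D : Set G) := by
  have : Group.IsNilpotent P := hP.isNilpotent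
  have h1 : D.subgroupOf P < ⊤ := by
    rw [lt_top_iff_ne_top, Ne, subgroupOf_eq_top]
    exact not_le_of_gt hD
  have h2 := Group.normalizerCondition_of_isNilpotent (G := P) _ h1
  obtain ⟨y, hy, hyD⟩ := SetLike.exists_of_lt h2
  refine ⟨y.1, y.2, fun h => hyD (mem_subgroupOf.2 h), ?_⟩
  rw [mem_normalizer_iff] at hy ⊢
  intro h
  constructor
  · intro hh
    exact (hy ⟨h, hD.le hh⟩).1 hh
  · intro hh
    have hP' : h ∈ P := by
      have := P.mul_mem (P.mul_mem (P.inv_mem y.2) (hD.le hh)) y.2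
      simpa [mul_assoc] using this
    exact (hy ⟨h, hP'⟩).2 hh

def HypA (p : ℕ) (G : Type*) [Group G] : Prop :=
  ∀ D : Subgroup G, IsPGroup p D → D ≠ ⊥ → ∀ n ∈ normalizer (D : Set G),
    ∃ k : ℕ, n ^ (p ^ k) ∈ centralizer (D : Set G)

lemma fusion_sylow {G : Type*} [Group G] [Finite G] {p : ℕ} [Fact p.Prime] (hA : HypA p G)
    {x : G} (hx : x ≠ 1) (m : ℕ) : ∀ P S : Sylow p G, x ∈ P → x ∈ S →
      Nat.card G - Nat.card ((P : Subgroup G) ⊓ S : Subgroup G) = m →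
      ∃ c : G, c * x = x * c ∧ c • P = S := by
  induction m using Nat.strong_induction_on with
  | _ m ih =>
  intro P S hxP hxS hm
  by_cases hPS : P = S
  · exact ⟨1, by simp, by simpa using hPS⟩
  set D : Subgroup G := (P : Subgroup G) ⊓ S with hDdef
  have hxD : x ∈ D := ⟨hxP, hxS⟩
  have hD0 : D ≠ ⊥ := by rintro h; rw [h, mem_bot] at hxD; exact hx hxD
  have hDp : IsPGroup p D := P.2.to_le inf_le_left
  have hDP : D < P := by
    refine lt_of_le_of_ne inf_le_left fun h => hPS ?_
    have : (P : Subgroup G) ≤ S := by rw [← h]; exact inf_le_right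
    exact (Sylow.ext (P.3 S.2 this)).symm
  have hDS : D < S := by
    refine lt_of_le_of_ne inf_le_right fun h => hPS ?_
    have : (S : Subgroup G) ≤ P := by rw [← h]; exact inf_le_left
    exact (Sylow.ext (S.3 P.2 this))
  obtain ⟨y, hyP, hyD, hyN⟩ := exists_norm_not_mem P.2 hDP
  obtain ⟨z, hzS, hzD, hzN⟩ := exists_norm_not_mem S.2 hDS
  set N := normalizer (D : Set G) with hN
  have hDN : D ≤ N := le_normalizer
  have hPN : IsPGroup p (P.1.subgroupOf N) := P.2.comap_of_injective _ N.subtype_injective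
  have hSN : IsPGroup p (S.1.subgroupOf N) := S.2.comap_of_injective _ N.subtype_injective
  obtain ⟨P1, hP1⟩ := hPN.exists_le_sylow
  obtain ⟨S1, hS1⟩ := hSN.exists_le_sylow
  obtain ⟨n, hn⟩ := MulAction.exists_smul_eq N P1 S1
  obtain ⟨c', hc', u, hu, rfl⟩ := lemma_F (C := (centralizer (D : Set G)).subgroupOf N) (fun n => by
    obtain ⟨k, hk⟩ := hA D hDp hD0 n.1 n.2
    exact ⟨k, hk⟩) P1 n
  have hu' : u • P1 = P1 := Sylow.smul_eq_iff_mem_normalizer.2 (le_normalizer hu)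
  rw [mul_smul, hu'] at hn
  have hc : (c' : G) ∈ centralizer (D : Set G) := hc'
  obtain ⟨c, hcc⟩ : ∃ c : G, (c' : G) = c := ⟨_, rfl⟩
  rw [hcc] at hc
  have hcx : ∀ w ∈ D, w * c = c * w := fun w hw => (mem_centralizer_iff.1 hc) w hw
  obtain ⟨P2, hP2⟩ := (P1.2.map N.subtype).exists_le_sylow
  have key1 : ∀ w ∈ N, w ∈ P → w ∈ P2 := fun w hw hwP => 
    hP2 ⟨⟨w, hw⟩, hP1 (mem_subgroupOf.2 hwP), rfl⟩
  have key2 : ∀ w ∈ N, w ∈ S → w ∈ c • P2 := by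
    intro w hw hwS
    have : (⟨w, hw⟩ : N) ∈ S1 := hS1 (mem_subgroupOf.2 hwS)
    rw [← hn, mem_smul_syl] at this
    rw [mem_smul_syl]
    exact hP2 ⟨_, this, by simp [hcc]⟩
  have big : ∀ (Q R : Sylow p G) (w : G), D ≤ (Q : Subgroup G) → D ≤ (R : Subgroup G) → w ∈ Q → w ∈ R →
      w ∉ D → Nat.card G - Nat.card ((Q : Subgroup G) ⊓ R : Subgroup G) < m := by
    intro Q R w h1 h2 h3 h4 h5
    have hlt : D < (Q : Subgroup G) ⊓ R :=
      lt_of_le_of_ne (le_inf h1 h2) (fun h => h5 (h ▸ ⟨h3, h4⟩))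
    have h6 : Nat.card D < Nat.card ((Q : Subgroup G) ⊓ R : Subgroup G) :=
      Set.ncard_lt_ncard hlt
    have h7 := Subgroup.card_le_card_group ((Q : Subgroup G) ⊓ R)
    omega
  have hDP2 : D ≤ (P2 : Subgroup G) := fun w hw => key1 w (hDN hw) hw.1
  have hDcP2 : D ≤ ((c • P2 : Sylow p G) : Subgroup G) := fun w hw => key2 w (hDN hw) hw.2
  obtain ⟨c1, hc1, hc1'⟩ := ih _ (big P P2 y hDP.le hDP2 hyP (key1 y hyN hyP) hyD) P P2 hxP
    (hDP2 hxD) rfl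
  obtain ⟨c2, hc2, hc2'⟩ := ih _ (big (c • P2) S z hDcP2 hDS.le (key2 z hzN hzS) hzS hzD) (c • P2) S
    (hDcP2 hxD) hxS rfl
  refine ⟨c2 * c * c1, ?_, ?_⟩
  · have hc3 := (hcx x hxD).symm
    exact ((Commute.mul_left (show Commute c2 x from hc2) hc3).mul_left hc1)
  · rw [mul_smul, mul_smul, hc1', hc2']

lemma fusion {G : Type*} [Group G] [Finite G] {p : ℕ} [Fact p.Prime] (hA : HypA p G)
    (P : Sylow p G) {x g : G} (hx : x ∈ P) (hg : g⁻¹ * x * g ∈ P) :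
    ∃ u ∈ P, g⁻¹ * x * g = u⁻¹ * x * u := by
  by_cases hx1 : x = 1
  · exact ⟨1, one_mem _, by simp [hx1]⟩
  obtain ⟨c, hc, hc'⟩ := fusion_sylow hA hx1 _ P (g • P) hx (mem_smul_syl.2 hg) rfl
  have h1 : (c⁻¹ * g) • P = P := by rw [mul_smul, ← hc', inv_smul_smul]
  rw [Sylow.smul_eq_iff_mem_normalizer] at h1
  have hP0 : (P : Subgroup G) ≠ ⊥ := by
    intro h
    have : x ∈ (P : Subgroup G) := hx
    rw [h, mem_bot] at this; exact hx1 this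
  obtain ⟨d, hd, u, hu, hdu⟩ := lemma_F
    (C := (centralizer ((P : Subgroup G) : Set G)).subgroupOf (normalizer ((P : Subgroup G) : Set G))) (fun n => by
    obtain ⟨k, hk⟩ := hA P P.2 hP0 n.1 n.2
    exact ⟨k, hk⟩) (P.subtype le_normalizer) ⟨_, h1⟩
  have hd' : (d : G) ∈ centralizer ((P : Subgroup G) : Set G) := hd
  have hdx : x * d = d * x := (mem_centralizer_iff.1 hd') x hx
  have hu' : (u : G) ∈ P := hu
  have hg' : c⁻¹ * g = d.1 * u.1 := congrArg Subtype.val hdu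
  have hg2 : g = c * (d.1 * u.1) := by rw [← hg']; group
  refine ⟨u.1, hu', ?_⟩
  have hc3 : c⁻¹ * x * c = x := by rw [mul_assoc, ← hc]; group
  have hd3 : (d.1)⁻¹ * x * d = x := by rw [mul_assoc, hdx]; group
  calc g⁻¹ * x * g = u.1⁻¹ * (d.1⁻¹ * (c⁻¹ * x * c) * d.1) * u.1 := by rw [hg2]; group
    _ = _ := by rw [hc3, hd3]

lemma comm_lt {G : Type*} [Group G] [Finite G] {p : ℕ} [Fact p.Prime] {P : Subgroup G}
    (hP : IsPGroup p P) (hH : P ≠ ⊥) : ⁅P, P⁆ < P := by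
  have hnil : Group.IsNilpotent P := hP.isNilpotent
  have : Group.IsSolvable P := inferInstance
  rw [← nontrivial_iff_ne_bot] at hH
  rw [← P.range_subtype, MonoidHom.range_eq_map, ← map_commutator, map_subtype_lt_map_subtype]
  exact Group.IsSolvable.commutator_lt_top_of_nontrivial P

lemma exists_normal_p_index {G : Type*} [Group G] [Finite G] {p : ℕ} [Fact p.Prime] (hA : HypA p G)
    (hp : p ∣ Nat.card G) : ∃ N : Subgroup G, N.Normal ∧ N ≠ ⊤ ∧ ∃ k, N.index = p ^ k := by
  obtain ⟨P⟩ : Nonempty (Sylow p G) := inferInstance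
  have hP0 : (P : Subgroup G) ≠ ⊥ := P.ne_bot_of_dvd_card hp
  have hfoc : (P : Subgroup G).focalSubgroup ≤ ⁅(P : Subgroup G), (P : Subgroup G)⁆ := by
    rw [focalSubgroup_def, closure_le]
    rintro g ⟨hg, x, hx, u, rfl⟩
    rw [commutatorElement_def] at hg
    have h1 : u⁻¹⁻¹ * x⁻¹ * u⁻¹ ∈ (P : Subgroup G) := by
      have := mul_mem (inv_mem hx) hg
      simpa [mul_assoc] using this
    obtain ⟨v, hv, hv'⟩ := fusion hA P (x := x⁻¹) (g := u⁻¹) (inv_mem hx) h1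
    rw [inv_inv] at hv'
    have h2 := commutator_mem_commutator (H₁ := (P : Subgroup G)) (H₂ := (P : Subgroup G)) hx
      (inv_mem hv)
    rw [commutatorElement_def] at h2
    rw [commutatorElement_def]
    have : x * u * x⁻¹ * u⁻¹ = x * v⁻¹ * x⁻¹ * v⁻¹⁻¹ := by
      calc x * u * x⁻¹ * u⁻¹ = x * (u * x⁻¹ * u⁻¹) := by group
        _ = _ := by rw [hv']; group
    rw [this]
    exact h2
  have hlt : (P : Subgroup G).focalSubgroup < P := lt_of_le_of_lt hfoc (comm_lt P.2 hP0)
  have hker := ker_transferFocal_inf_eq_focalSubgroup P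
  refine ⟨(P : Subgroup G).transferFocal.ker, inferInstance, ?_, ?_⟩
  · intro h
    rw [h, top_inf_eq] at hker
    exact hlt.ne hker.symm
  · have h1 : IsPGroup p (P ⧸ (P : Subgroup G).focalSubgroupOf) := P.2.to_quotient _
    obtain ⟨k, hk⟩ := h1.exists_card_eq
    exact ⟨k, by rw [index, Nat.card_congr (transferFocal.quotientKerMulEquivQuotientFocalSubroupOf P).toEquiv, hk]⟩



lemma coprime_split {a b n : ℕ} (h1 : ∀ r : ℕ, r.Prime → r ∣ a → n ≤ r)
    (h2 : ∀ r : ℕ, r.Prime → r ∣ b → r < n) : Nat.Coprime a b := by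
  by_contra h
  obtain ⟨r, hr, ha, hb⟩ := Nat.Prime.not_coprime_iff_dvd.1 h
  have := h1 r hr ha; have := h2 r hr hb; omega

lemma ore_in {G : Type*} [Group G] [Finite G] {N : Subgroup G} (hN : N.Normal)
    (hs : IsSupersoluble N) (n : ℕ) : ∃ K : Subgroup G, K.Normal ∧ K ≤ N ∧
    (∀ r : ℕ, r.Prime → r ∣ Nat.card K → n ≤ r) ∧ ∃ i, (∀ r : ℕ, r.Prime → r ∣ i → r < n) ∧
    Nat.card N = Nat.card K * i ∧ K.index = i * N.index := by
  obtain ⟨K', hK', h1, h2⟩ := ore n hs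
  have hKN : K'.map N.subtype ≤ N := map_subtype_le K'
  have hsub : (K'.map N.subtype).subgroupOf N = K' := by
    rw [subgroupOf, comap_map_eq_self_of_injective N.subtype_injective]
  have hcK : Nat.card (K'.map N.subtype) = Nat.card K' :=
    card_map_of_injective N.subtype_injective
  have hrel : (K'.map N.subtype).relIndex N = K'.index := by rw [relIndex, hsub]
  refine ⟨K'.map N.subtype, hall_normal hN hKN (by rwa [hsub]) ?_, hKN, ?_, K'.index, h2, ?_, ?_⟩
  · rw [hcK, hrel]; exact coprime_split h1 h2
  · rwa [hcK]
  · rw [hcK, card_mul_index]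
  · rw [← relIndex_mul_index hKN, hrel]

lemma isPGroup_of_primes {G : Type*} [Group G] [Finite G] {p : ℕ} 
    (h : ∀ r : ℕ, r.Prime → r ∣ Nat.card G → r = p) : IsPGroup p G :=
  IsPGroup.of_card (Nat.eq_prime_pow_of_unique_prime_dvd Nat.card_pos.ne' (fun {r} hr hd => h r hr hd))

lemma partI_B {G : Type*} [Group G] [Finite G] (hprop : ∀ H : Subgroup G, H ≠ ⊤ → IsSupersoluble H)
    {p : ℕ} [hp : Fact p.Prime] (hmin : ∀ r : ℕ, r.Prime → r ∣ Nat.card G → p ≤ r)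
    (hA : ¬ HypA p G) : 
    ∃ P : Subgroup G, P.Normal ∧ IsPGroup p P ∧ P ≠ ⊥ ∧ ¬ p ∣ P.index := by
  unfold HypA at hA
  push Not at hA
  obtain ⟨D, hDp, hD0, n, hn, hnk⟩ := hA
  obtain ⟨k, m, hm, hkm⟩ := Nat.exists_eq_pow_mul_and_not_dvd (orderOf_pos n).ne' p hp.out.ne_one
  have hx := hnk k
  set x := n ^ p ^ k with hxdef
  have hxo : orderOf x = m := by
    rw [hxdef, orderOf_pow' _ (pow_ne_zero _ hp.out.ne_zero), hkm]
    rw [Nat.gcd_eq_right (dvd_mul_right _ _), Nat.mul_div_cancel_left _ (pow_pos hp.out.pos _)]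
  have hxn : x ∈ normalizer (D : Set G) := pow_mem hn _
  set H := D ⊔ zpowers x with hH
  have hHN : H ≤ normalizer (D : Set G) := sup_le le_normalizer (by rwa [zpowers_le])
  by_cases hHt : H = ⊤
  · have hDn : D.Normal := by
      rw [← normalizer_eq_top_iff]; rw [hHt] at hHN; exact top_le_iff.1 hHN
    refine ⟨D, hDn, hDp, hD0, fun hd => hm ?_⟩
    have hz : ∀ g : G ⧸ D, g ∈ zpowers (x : G ⧸ D) := by
      intro g
      obtain ⟨g, rfl⟩ := QuotientGroup.mk_surjective g
      have : g ∈ D ⊔ zpowers x := by rw [← hH, hHt]; trivial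
      rw [mem_sup_of_normal_left] at this
      obtain ⟨d, hd, _, ⟨j, rfl⟩, rfl⟩ := this
      refine ⟨j, ?_⟩
      rw [QuotientGroup.mk_mul, (QuotientGroup.eq_one_iff d).2 hd, one_mul]
      rfl
    have hc : Nat.card (G ⧸ D) = orderOf (x : G ⧸ D) := (orderOf_eq_card_of_forall_mem_zpowers hz).symm
    rw [← hxo]
    refine hd.trans ?_
    rw [index, hc]
    exact orderOf_map_dvd (QuotientGroup.mk' D) x
  · exfalso
    obtain ⟨K, hK, h1, h2⟩ := ore (p + 1) (hprop H hHt)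
    have hxH : x ∈ H := mem_sup_right (mem_zpowers x)
    have hDH : D ≤ H := le_sup_left
    have hxK : (⟨x, hxH⟩ : H) ∈ K := by
      refine mem_of_pow_coprime (m := m) (n := K.index) ?_ ?_ (K.pow_index_mem _)
      · by_contra h
        obtain ⟨r, hr, ha, hb⟩ := Nat.Prime.not_coprime_iff_dvd.1 h
        have e1 := h2 r hr hb
        have e2 := hmin r hr (hb.trans (K.index_dvd_card.trans H.card_subgroup_dvd_card))
        have : r = p := by omega
        exact hm (this ▸ ha)
      · have : (⟨x, hxH⟩ : H) ^ m = 1 := Subtype.ext (by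
          change x ^ m = 1
          rw [← hxo, pow_orderOf_eq_one])
        rw [this]; exact one_mem _
    apply hx
    rw [mem_centralizer_iff]
    intro d hd
    set z := x * d * x⁻¹ * d⁻¹ with hz
    have hzD : z ∈ D := D.mul_mem ((mem_normalizer_iff.1 hxn d).1 hd) (D.inv_mem hd)
    have hzK : (⟨z, hDH hzD⟩ : H) ∈ K := by
      have e := K.mul_mem hxK (hK.conj_mem _ (K.inv_mem hxK) ⟨d, hDH hd⟩)
      convert e using 1
      apply Subtype.ext
      change z = x * (d * x⁻¹ * d⁻¹)
      rw [hz]; group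
    obtain ⟨j, hj⟩ := hDp ⟨z, hzD⟩
    have hz1 : z ^ p ^ j = 1 := congrArg Subtype.val hj
    have hz2 : z ^ Nat.card K = 1 := by
      have e := pow_card_eq_one' (x := (⟨⟨z, hDH hzD⟩, hzK⟩ : K))
      exact congrArg Subtype.val (congrArg Subtype.val e)
    have hpK : ¬ p ∣ Nat.card K := fun h => by have := h1 p hp.out h; omega
    have : z ∈ (⊥ : Subgroup G) := mem_of_pow_coprime (K := ⊥) 
      (Nat.Coprime.pow_left j (hp.out.coprime_iff_not_dvd.2 hpK)) (by rw [hz1]; exact one_mem _)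
        (by rw [hz2]; exact one_mem _)
    rw [mem_bot, hz] at this
    have h3 := mul_inv_eq_one.1 this
    exact (mul_inv_eq_iff_eq_mul.1 h3).symm

lemma partI_A {G : Type*} [Group G] [Finite G] (hprop : ∀ H : Subgroup G, H ≠ ⊤ → IsSupersoluble H)
    {p : ℕ} [hp : Fact p.Prime] (hmin : ∀ r : ℕ, r.Prime → r ∣ Nat.card G → p ≤ r)
    (hpd : p ∣ Nat.card G) (hnt : (⊤ : Subgroup G) ≠ ⊥) (hA : HypA p G) : 
    ∃ q : ℕ, q.Prime ∧ ∃ P : Subgroup G, P.Normal ∧ IsPGroup q P ∧ P ≠ ⊥ ∧ ¬ q ∣ P.index := by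
  obtain ⟨N, hN, hNt, k, hk⟩ := exists_normal_p_index hA hpd
  obtain ⟨K, hK, hKN, h1, i, hi, hci, hii⟩ := ore_in hN (hprop N hNt) (p + 1)
  have hKi : ∀ r : ℕ, r.Prime → r ∣ K.index → r = p := by
    intro r hr hd
    have e1 := hmin r hr (hd.trans K.index_dvd_card)
    rw [hii, hk] at hd
    rcases (Nat.Prime.dvd_mul hr).1 hd with h | h
    · have := hi r hr h; omega
    · exact (Nat.prime_dvd_prime_iff_eq hr hp.out).1 (hr.dvd_of_dvd_pow h)
  by_cases hK0 : K = ⊥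
  · refine ⟨p, hp.out, ⊤, inferInstance, ?_, hnt, ?_⟩
    · apply isPGroup_of_primes
      rw [hK0, index_bot] at hKi
      rwa [card_top]
    · rw [index_top]; exact hp.out.one_lt.ne' ∘ Nat.dvd_one.1
  have hKt : K ≠ ⊤ := by rintro rfl; exact hNt (top_le_iff.1 hKN)
  have hc1 : Nat.card K ≠ 1 := by rwa [Ne, card_eq_one]
  have hne : (Nat.card K).primeFactors.Nonempty := by
    obtain ⟨r, hr, hd⟩ := Nat.exists_prime_and_dvd hc1
    exact ⟨r, Nat.mem_primeFactors.2 ⟨hr, hd, Nat.card_pos.ne'⟩⟩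
  obtain ⟨q, hq, hqmax⟩ := Finset.exists_max_image (Nat.card K).primeFactors id hne
  simp only [Nat.mem_primeFactors, id] at hq hqmax
  obtain ⟨Q, hQ, hQK, e1, j, hj, hcj, hij⟩ := ore_in hK (hprop K hKt) q
  have hqj : ¬ q ∣ j := fun h => lt_irrefl _ (hj q hq.1 h)
  refine ⟨q, hq.1, Q, hQ, ?_, ?_, ?_⟩
  · apply isPGroup_of_primes
    intro r hr hd
    have := e1 r hr hd
    have := hqmax r ⟨hr, hd.trans (hcj ▸ dvd_mul_right _ _), Nat.card_pos.ne'⟩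
    omega
  · rintro rfl
    rw [card_bot, one_mul] at hcj
    exact hqj (hcj ▸ hq.2.1)
  · rw [hij]
    intro h
    rcases (Nat.Prime.dvd_mul hq.1).1 h with h | h
    · exact hqj h
    · have := hKi q hq.1 h
      have := h1 q hq.1 hq.2.1
      omega

lemma partI {G : Type*} [Group G] [Finite G] (hG : IsMinimalNonsupersoluble G) : 
    ∃ q : ℕ, q.Prime ∧ ∃ P : Subgroup G, P.Normal ∧ IsPGroup q P ∧ P ≠ ⊥ ∧ ¬ q ∣ P.index := by
  have hnt : (⊤ : Subgroup G) ≠ ⊥ := by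
    intro h
    apply hG.1
    apply isSupersoluble_of_sChain
    rw [h]
  have hc1 : Nat.card G ≠ 1 := by
    intro h
    apply hnt
    rw [← card_eq_one, card_top, h]
  have : Fact (Nat.card G).minFac.Prime := ⟨Nat.minFac_prime hc1⟩
  have hmin : ∀ r : ℕ, r.Prime → r ∣ Nat.card G → (Nat.card G).minFac ≤ r :=
    fun r hr hd => Nat.minFac_le_of_dvd hr.two_le hd
  by_cases hA : HypA (Nat.card G).minFac G
  · exact partI_A hG.2 hmin (Nat.minFac_dvd _) hnt hA
  · exact ⟨_, Nat.minFac_prime hc1, partI_B hG.2 hmin hA⟩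


lemma eig_lin {p : ℕ} [hp : Fact p.Prime] {V : Type*} [AddCommGroup V] [Module (ZMod p) V] [Finite V]
    [Nontrivial V] (T : V →ₗ[ZMod p] V) (h : T ^ (p - 1) = 1) :
    ∃ (i : ℕ) (v : V), v ≠ 0 ∧ T v = i • v := by
  have : Module.Finite (ZMod p) V := Module.Finite.of_finite
  have hT : T ^ p - T = 0 := by
    have : p = (p - 1) + 1 := by have := hp.out.pos; omega
    have h3 : T ^ p = T ^ (p - 1) * T := by rw [← pow_succ, ← this]
    rw [h3, h, one_mul, sub_self]
  have hd : minpoly (ZMod p) T ∣ Polynomial.X ^ p - Polynomial.X := by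
    apply minpoly.dvd
    simp [hT]
  have hsp : (Polynomial.X ^ p - Polynomial.X : Polynomial (ZMod p)).Splits := by
    have := FiniteField.X_pow_card_sub_X_natDegree_eq (ZMod p) (p := p) hp.out.one_lt
    have h2 := FiniteField.roots_X_pow_card_sub_X (ZMod p)
    rw [ZMod.card] at h2
    rw [Polynomial.splits_iff_card_roots, this, h2]
    simp [ZMod.card]
  have hne : (Polynomial.X ^ p - Polynomial.X : Polynomial (ZMod p)) ≠ 0 :=
    FiniteField.X_pow_card_sub_X_ne_zero _ hp.out.one_lt
  have hint : IsIntegral (ZMod p) T := Algebra.IsIntegral.isIntegral T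
  have hsp2 := hsp.of_dvd hne hd
  obtain ⟨μ, hμ⟩ := hsp2.exists_eval_eq_zero (minpoly.degree_pos hint).ne'
  have := Module.End.hasEigenvalue_of_isRoot hμ
  obtain ⟨v, hv⟩ := this.exists_hasEigenvector
  refine ⟨μ.val, v, hv.2, ?_⟩
  rw [hv.apply_eq_smul, ← Nat.cast_smul_eq_nsmul (ZMod p), ZMod.natCast_zmod_val]

lemma eig_grp {p : ℕ} [hp : Fact p.Prime] {V : Type*} [CommGroup V] [Finite V]
    [Nontrivial V] (hV : ∀ v : V, v ^ p = 1) (φ : V →* V) (h : ∀ v, φ^[p - 1] v = v) :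
    ∃ (i : ℕ) (v : V), v ≠ 1 ∧ φ v = v ^ i := by
  let : Module (ZMod p) (Additive V) := AddCommGroup.zmodModule (fun x => hV x.toMul)
  obtain ⟨i, v, hv, hi⟩ := eig_lin (p := p) (V := Additive V)
    (φ.toAdditive.toZModLinearMap p) (by
      ext v
      rw [Module.End.pow_apply]
      exact h v.toMul)
  exact ⟨i, v.toMul, hv, hi⟩

lemma eig_sub {p : ℕ} [hp : Fact p.Prime] {G : Type*} [Group G] [Finite G] {V : Subgroup G}
    (hVn : V.Normal) (hV0 : V ≠ ⊥) (hc : ∀ v ∈ V, ∀ w ∈ V, v * w = w * v)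
    (hV : ∀ v ∈ V, v ^ p = 1) {a : G} (ha : ∀ v ∈ V, a ^ (p - 1) * v = v * a ^ (p - 1)) :
    ∃ i : ℕ, ∃ v ∈ V, v ≠ 1 ∧ a * v * a⁻¹ = v ^ i := by
  let : CommGroup V := { (inferInstance : Group V) with 
    mul_comm := fun v w => Subtype.ext (hc v v.2 w w.2) }
  have : Nontrivial V := by rwa [nontrivial_iff_ne_bot]
  have hit : ∀ (k : ℕ) (v : V), (((MulAut.conjNormal (H := V) a).toMonoidHom^[k] v : V) : G) =
      a ^ k * v * (a ^ k)⁻¹ := by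
    intro k
    induction k with
    | zero => intro v; simp
    | succ k ih =>
      intro v
      rw [Function.iterate_succ_apply, ih]
      change a ^ k * ((MulAut.conjNormal (H := V) a v : V) : G) * (a ^ k)⁻¹ = _
      rw [MulAut.conjNormal_apply, pow_succ]; group
  obtain ⟨i, v, hv, hi⟩ := eig_grp (p := p) (V := V) (fun v => Subtype.ext (hV v v.2))
    (MulAut.conjNormal (H := V) a).toMonoidHom (fun v => Subtype.ext (by
      rw [hit, ha v v.2]; group))
  refine ⟨i, v, v.2, fun h => hv (Subtype.ext h), ?_⟩
  have := congrArg Subtype.val hi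
  exact this

lemma omega_exists {p : ℕ} [hp : Fact p.Prime] {G : Type*} [Group G] [Finite G] {P : Subgroup G}
    (hPn : P.Normal) (hP : IsPGroup p P) (hP0 : P ≠ ⊥) : ∃ W : Subgroup G, W.Normal ∧ W ≤ P ∧ W ≠ ⊥ ∧
      (∀ w ∈ W, ∀ y ∈ P, y * w = w * y) ∧ ∀ w ∈ W, w ^ p = 1 := by
  let W : Subgroup G := 
    { carrier := {w | w ∈ P ∧ (∀ y ∈ P, y * w = w * y) ∧ w ^ p = 1}
      one_mem' := ⟨one_mem _, by simp, by simp⟩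
      mul_mem' := by
        rintro v w ⟨h1, h2, h3⟩ ⟨h4, h5, h6⟩
        refine ⟨mul_mem h1 h4, fun y hy => Commute.mul_right (h2 y hy) (h5 y hy), ?_⟩
        have : Commute v w := h5 v h1
        rw [this.mul_pow, h3, h6, one_mul]
      inv_mem' := by
        rintro v ⟨h1, h2, h3⟩
        exact ⟨inv_mem h1, fun y hy => Commute.inv_right (h2 y hy), by rw [inv_pow, h3, inv_one]⟩ }
  refine ⟨W, ⟨?_⟩, fun w hw => hw.1, ?_, fun w hw => hw.2.1, fun w hw => hw.2.2⟩
  · rintro w ⟨h1, h2, h3⟩ g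
    refine ⟨hPn.conj_mem w h1 g, fun y hy => ?_, by rw [conj_pow, h3]; simp⟩
    have := h2 (g⁻¹ * y * g) (by simpa using hPn.conj_mem y hy g⁻¹)
    calc y * (g * w * g⁻¹) = g * ((g⁻¹ * y * g) * w) * g⁻¹ := by group
      _ = _ := by rw [this]; group
  · have : Nontrivial P := by rwa [nontrivial_iff_ne_bot]
    have h1 := hP.center_nontrivial
    have h2 : IsPGroup p (center P) := hP.to_subgroup _
    have h3 : p ∣ Nat.card (center P) := by
      obtain ⟨n, hn, h⟩ := (IsPGroup.nontrivial_iff_card h2).1 h1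
      rw [h]; exact dvd_pow_self _ (by omega)
    obtain ⟨z, hz⟩ := exists_prime_orderOf_dvd_card' p h3
    intro h0
    have hzW : ((z : P) : G) ∈ W := by
      refine ⟨z.1.2, fun y hy => ?_, ?_⟩
      · exact congrArg Subtype.val (mem_center_iff.1 z.2 ⟨y, hy⟩)
      · have := pow_orderOf_eq_one z
        rw [hz] at this
        exact congrArg Subtype.val (congrArg Subtype.val this)
    rw [h0, mem_bot] at hzW
    have : z = 1 := Subtype.ext (Subtype.ext hzW)
    rw [this, orderOf_one] at hz
    exact hp.out.one_lt.ne hz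

lemma lemma_Z_aux (p m : ℕ) [hp : Fact p.Prime] : ∀ (G : Type*) [Group G] [Finite G], Nat.card G = m →
    ∀ P H : Subgroup G, P.Normal → IsPGroup p P → P ⊔ H = ⊤ →
    (∀ a ∈ H, ∀ b ∈ H, ∀ y ∈ P, (a * b * a⁻¹ * b⁻¹) * y = y * (a * b * a⁻¹ * b⁻¹)) →
    (∀ a ∈ H, ∀ y ∈ P, a ^ (p - 1) * y = y * a ^ (p - 1)) → SChain P ⊤ → IsSupersoluble G := by
  induction m using Nat.strong_induction_on with
  | _ m ih =>
  intro G _ _ hG P H hPn hP hPH hE1 hE2 hch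
  by_cases hP0 : P = ⊥
  · subst hP0; exact isSupersoluble_of_sChain hch
  obtain ⟨W, hWn, hWP, hW0, hWc, hWp⟩ := omega_exists hPn hP hP0
  obtain ⟨V, hVn, hVW, hV0, hVmin⟩ := exists_minimal_normal hWn hW0
  have hVP := hVW.trans hWP
  have hVc : ∀ v ∈ V, ∀ w ∈ V, v * w = w * v := fun v hv w hw => hWc w (hVW hw) v (hVP hv)
  have hpow : ∀ a ∈ H, ∃ i : ℕ, ∀ v ∈ V, a * v * a⁻¹ = v ^ i := by
    intro a ha
    obtain ⟨i, v, hv, hv1, hi⟩ := eig_sub (p := p) hVn hV0 hVc (fun v hv => hWp v (hVW hv))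
      (fun v hv => hE2 a ha v (hVP hv))
    refine ⟨i, ?_⟩
    let U : Subgroup G := 
      { carrier := {w | w ∈ V ∧ a * w * a⁻¹ = w ^ i}
        one_mem' := ⟨one_mem _, by simp⟩
        mul_mem' := by
          rintro v w ⟨h1, h2⟩ ⟨h3, h4⟩
          refine ⟨mul_mem h1 h3, ?_⟩
          have : Commute v w := hVc v h1 w h3
          rw [this.mul_pow, ← h2, ← h4]; group
        inv_mem' := by
          rintro v ⟨h1, h2⟩
          refine ⟨inv_mem h1, ?_⟩
          rw [inv_pow, ← h2]; group }
    have hUn : U.Normal := by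
      refine ⟨?_⟩
      rintro w ⟨h1, h2⟩ g
      refine ⟨hVn.conj_mem w h1 g, ?_⟩
      have hg : g ∈ P ⊔ H := hPH ▸ mem_top g
      rw [sup_comm, mem_sup_of_normal_right] at hg
      obtain ⟨h, hh, y, hy, rfl⟩ := hg
      have e1 : h * y * w * (h * y)⁻¹ = h * w * h⁻¹ := by
        have := hWc w (hVW h1) y hy
        calc h * y * w * (h * y)⁻¹ = h * (y * w) * y⁻¹ * h⁻¹ := by group
          _ = _ := by rw [this]; group
      rw [e1]
      have e2 := hE1 a ha h hh _ (hVP (V.pow_mem (hVn.conj_mem w h1 h) i))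
      have e3 : h * w ^ i * h⁻¹ = (h * w * h⁻¹) ^ i := (conj_pow).symm
      calc a * (h * w * h⁻¹) * a⁻¹ = (a * h * a⁻¹ * h⁻¹) * (h * (a * w * a⁻¹) * h⁻¹) * (a * h * a⁻¹ * h⁻¹)⁻¹ := by group
        _ = (h * w * h⁻¹) ^ i := by rw [h2, e3, e2]; group
    rcases hVmin U hUn (fun w hw => hw.1) with h | h
    · exfalso
      have : v ∈ U := ⟨hv, hi⟩
      rw [h, mem_bot] at this
      exact hv1 this
    · intro w hw
      rw [← h] at hw
      exact hw.2
  obtain ⟨v, hv, hv1⟩ : ∃ v : G, v ∈ V ∧ v ≠ 1 := by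
    by_contra! hcon
    exact hV0 ((eq_bot_iff_forall V).2 hcon)
  have hzn : (zpowers (v : G)).Normal := by
    refine ⟨?_⟩
    rintro _ ⟨k, rfl⟩ g
    have hg : g ∈ P ⊔ H := hPH ▸ mem_top g
    rw [sup_comm, mem_sup_of_normal_right] at hg
    obtain ⟨h, hh, y, hy, rfl⟩ := hg
    obtain ⟨i, hi⟩ := hpow h hh
    have e0 := hWc v (hVW hv) y hy
    have e1 : h * y * v * (h * y)⁻¹ = (v : G) ^ i := by
        rw [← hi v hv]
        calc h * y * v * (h * y)⁻¹ = h * (y * v) * y⁻¹ * h⁻¹ := by group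
          _ = _ := by rw [e0]; group
    beta_reduce
    rw [← conj_zpow, e1]
    exact zpow_mem (pow_mem (mem_zpowers _) _) _
  have hVz : zpowers (v : G) = V := by
    rcases hVmin _ hzn (by rwa [zpowers_le]) with h | h
    · rw [zpowers_eq_bot] at h; exact absurd h hv1
    · exact h
  have hcard : Nat.card G = Nat.card (G ⧸ V) * Nat.card V := card_eq_card_quotient_mul_card_subgroup V
  have hVc1 : 1 < Nat.card V := by rwa [one_lt_card_iff_ne_bot]
  have hsur := QuotientGroup.mk'_surjective V
  have hq := ih (Nat.card (G ⧸ V)) (by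
    rw [← hG, hcard]; exact lt_mul_of_one_lt_right Nat.card_pos hVc1) (G ⧸ V) rfl
    (P.map (QuotientGroup.mk' V)) (H.map (QuotientGroup.mk' V)) (hPn.map _ hsur) (hP.map _)
    (by rw [← Subgroup.map_sup, hPH, Subgroup.map_top_of_surjective _ hsur])
    (by
      rintro _ ⟨a, ha, rfl⟩ _ ⟨b, hb, rfl⟩ _ ⟨y, hy, rfl⟩
      have := congrArg (QuotientGroup.mk' V) (hE1 a ha b hb y hy)
      simpa only [map_mul, map_inv] using this)
    (by
      rintro _ ⟨a, ha, rfl⟩ _ ⟨y, hy, rfl⟩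
      have := congrArg (QuotientGroup.mk' V) (hE2 a ha y hy)
      simpa only [map_mul, map_pow] using this)
    (by
      have := sChain_map hsur hch
      rwa [Subgroup.map_top_of_surjective _ hsur] at this)
  refine isSupersoluble_of_sChain (Relation.ReflTransGen.head ?_ (sChain_of_quot hq))
  exact ⟨inferInstance, hVn, v, by rw [bot_sup_eq, hVz]⟩


lemma transfer_central {G : Type*} [Group G] [Finite G] {p : ℕ} [hp : Fact p.Prime] {P B M : Subgroup G}
    (hP : IsPGroup p P) (hPn : P.Normal) (hpi : ¬ p ∣ P.index) (hPB : P ≤ B) (hPc : P ≤ ⁅B, B⁆)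
    (hMP : M ≤ P) (hMc : ∀ m ∈ M, ∀ b ∈ B, b * m = m * b) : M ≤ ⁅P, P⁆ := by
  intro m hm
  have hmP := hMP hm
  have hco : Nat.Coprime p (P.subgroupOf B).index := by
    rw [hp.out.coprime_iff_not_dvd]
    intro h
    exact hpi (h.trans (relIndex_dvd_index_of_normal P B))
  obtain ⟨k, hk⟩ := hP ⟨m, hmP⟩
  have hk' : m ^ p ^ k = 1 := congrArg Subtype.val hk
  refine mem_of_pow_coprime (Nat.Coprime.pow_left k hco) (by rw [hk']; exact one_mem _) ?_
  set P' := P.subgroupOf B with hP'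
  let τ : B →* Abelianization P' := MonoidHom.transfer (Abelianization.of (G := P'))
  have h1 : (⟨m, hPB hmP⟩ : B) ∈ commutator B := by
    have : m ∈ ⁅B, B⁆ := hPc hmP
    rw [← map_subtype_commutator] at this
    obtain ⟨x, hx, hxm⟩ := this
    have : x = ⟨m, hPB hmP⟩ := Subtype.ext hxm
    exact this ▸ hx
  have h2 : τ ⟨m, hPB hmP⟩ = 1 := Abelianization.commutator_subset_ker τ h1
  have key : ∀ (k : ℕ) (g₀ : B), g₀⁻¹ * (⟨m, hPB hmP⟩ : B) ^ k * g₀ ∈ P' →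
      g₀⁻¹ * (⟨m, hPB hmP⟩ : B) ^ k * g₀ = (⟨m, hPB hmP⟩ : B) ^ k := by
    intro k g₀ _
    have : Commute g₀ (⟨m, hPB hmP⟩ : B) := Subtype.ext (hMc m hm g₀.1 g₀.2)
    rw [mul_assoc, ← (this.pow_right k).eq]; group
  have h3 := MonoidHom.transfer_eq_pow (Abelianization.of (G := P')) (⟨m, hPB hmP⟩ : B) key
  have h4 : Abelianization.of (G := P') ⟨(⟨m, hPB hmP⟩ : B) ^ P'.index,
    MonoidHom.transfer_eq_pow_aux _ key⟩ = 1 := h3.symm.trans h2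
  rw [← MonoidHom.mem_ker, Abelianization.ker_of] at h4
  have h5 := mem_map_of_mem (B.subtype.comp P'.subtype) h4
  rw [commutator_def, map_commutator] at h5
  refine commutator_mono ?_ ?_ h5
  · rintro _ ⟨x, -, rfl⟩; exact x.2
  · rintro _ ⟨x, -, rfl⟩; exact x.2

lemma partII {G : Type*} [Group G] [Finite G] (hG : IsMinimalNonsupersoluble G) {p : ℕ} [hp : Fact p.Prime]
    {P : Subgroup G} (hPn : P.Normal) (hP : IsPGroup p P) (hP0 : P ≠ ⊥) (hpi : ¬ p ∣ P.index) :
    SChain P ⊤ ∧ ∀ M : Subgroup G, M.Normal → M ≤ P → M ≠ P → M ≤ ⁅P, P⁆ := by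
  obtain ⟨j, hj⟩ := hP.exists_card_eq
  have hco : Nat.Coprime (Nat.card P) P.index := by
    rw [hj]; exact Nat.Coprime.pow_left j (hp.out.coprime_iff_not_dvd.2 hpi)
  obtain ⟨H, hH⟩ := Subgroup.exists_right_complement'_of_coprime hco
  have hsup : P ⊔ H = ⊤ := hH.sup_eq_top
  have hdis : P ⊓ H = ⊥ := hH.disjoint.eq_bot
  have hHt : H ≠ ⊤ := by rintro rfl; rw [inf_top_eq] at hdis; exact hP0 hdis
  have hcH : Nat.card H = P.index := hH.symm.index_eq_card.symm
  have hsur : Function.Surjective ((QuotientGroup.mk' P).comp H.subtype) := by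
    intro g
    obtain ⟨g, rfl⟩ := QuotientGroup.mk_surjective g
    have hg : g ∈ P ⊔ H := hsup ▸ mem_top g
    rw [mem_sup_of_normal_left] at hg
    obtain ⟨y, hy, h, hh, rfl⟩ := hg
    refine ⟨⟨h, hh⟩, ?_⟩
    rw [QuotientGroup.mk_mul, (QuotientGroup.eq_one_iff y).2 hy, one_mul]
    rfl
  have hch : SChain P ⊤ := sChain_of_quot (ss_map hsur (hG.2 H hHt))
  refine ⟨hch, ?_⟩
  let E : Set G := {h | ∃ a ∈ H, ∃ b ∈ H, h = a * b * a⁻¹ * b⁻¹ ∨ h = a ^ (p - 1)}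
  have hEH : ∀ h ∈ E, h ∈ H := by
    rintro h ⟨a, ha, b, hb, rfl | rfl⟩
    · exact mul_mem (mul_mem (mul_mem ha hb) (inv_mem ha)) (inv_mem hb)
    · exact pow_mem ha _
  have hHo : ∀ h ∈ H, Nat.Coprime (orderOf h) p := by
    intro h hh
    refine Nat.Coprime.coprime_dvd_left (Subgroup.orderOf_dvd_natCard H hh) ?_
    rw [hcH]
    exact (hp.out.coprime_iff_not_dvd.2 hpi).symm
  have hEM : ∀ M : Subgroup G, M.Normal → M ≤ P → M ≠ P → ∀ h ∈ E, ∀ y ∈ M, h * y = y * h := by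
    intro M hMn hMP hMne h hhE y hy
    have hMH : M ⊔ H ≠ ⊤ := by
      intro ht
      apply hMne
      refine le_antisymm hMP fun x hx => ?_
      have hx' : x ∈ M ⊔ H := ht ▸ mem_top x
      rw [mem_sup_of_normal_left] at hx'
      obtain ⟨m, hm, u, hu, rfl⟩ := hx'
      have huP : u ∈ P := by
        have := P.mul_mem (P.inv_mem (hMP hm)) hx
        simpa using this
      have : u ∈ P ⊓ H := ⟨huP, hu⟩
      rw [hdis, mem_bot] at this
      rw [this, mul_one]; exact hm
    have hHX : H ≤ M ⊔ H := le_sup_right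
    have hMX : M ≤ M ⊔ H := le_sup_left
    have hhH := hEH h hhE
    obtain ⟨a, ha, b, hb, hab⟩ := hhE
    have := lemma_S hp.out (hG.2 _ hMH) (Y := M.subgroupOf (M ⊔ H)) (hMn.subgroupOf _)
      ((hP.to_le hMP).comap_of_injective _ (M ⊔ H).subtype_injective)
      (a := ⟨a, hHX ha⟩) (b := ⟨b, hHX hb⟩) (h := ⟨h, hHX hhH⟩)
      (by rw [← Subgroup.orderOf_coe]; exact hHo h hhH)
      (by
        rcases hab with h1 | h1
        · left; exact Subtype.ext h1
        · right; exact Subtype.ext h1) ⟨y, hMX hy⟩ hy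
    exact congrArg Subtype.val this
  intro M hMn hMP hMne
  set B := normalClosure E with hB
  have hBc : B ≤ centralizer (M : Set G) := by
    apply normalClosure_le_normal
    intro h hh
    rw [SetLike.mem_coe, mem_centralizer_iff]
    intro y hy
    exact (hEM M hMn hMP hMne h hh y hy).symm
  have hBn : B.Normal := normalClosure_normal
  have hNP : ⁅P, B⁆ = P := by
    by_contra hne
    have hle : ⁅P, B⁆ ≤ P := commutator_le_left P B
    have hE := hEM ⁅P, B⁆ inferInstance hle hne
    have hEP : ∀ h ∈ E, ∀ y ∈ P, h * y = y * h := by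
      intro h hh y hy
      refine coprime_act (hP.to_le hle) (hHo h (hEH h hh)) ?_ (hE h hh)
      rw [commutator_comm]
      exact commutator_mem_commutator (subset_normalClosure hh) hy
    exact hG.1 (lemma_Z_aux p _ G rfl P H hPn hP hsup
      (fun a ha b hb y hy => hEP _ ⟨a, ha, b, hb, Or.inl rfl⟩ y hy)
      (fun a ha y hy => hEP _ ⟨a, ha, a, ha, Or.inr rfl⟩ y hy) hch)
  have hPB : P ≤ B := hNP ▸ commutator_le_right P B
  have hPc : P ≤ ⁅B, B⁆ := hNP.symm.le.trans (commutator_mono hPB le_rfl)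
  exact transfer_central hP hPn hpi hPB hPc hMP
    (fun m hm b hb => (mem_centralizer_iff.1 (hBc hb) m hm).symm)


lemma comm_le_frattini {Q : Type*} [Group Q] [Finite Q] {p : ℕ} [hp : Fact p.Prime]
    (hQ : IsPGroup p Q) : commutator Q ≤ frattini Q := by
  have : Group.IsNilpotent Q := hQ.isNilpotent
  unfold frattini Order.radical
  rw [le_iInf₂_iff]
  intro K hK
  have hKn : K.Normal := Group.normalizerCondition_of_isNilpotent.normal_of_coatom K hK
  by_contra hle
  have h1 : K ⊔ commutator Q = ⊤ := hK.2 _ (lt_of_le_of_ne le_sup_left (fun h => hle (h ▸ le_sup_right)))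
  have hnt : Nontrivial (Q ⧸ K) := QuotientGroup.nontrivial_iff.2 hK.1
  have h2 := Group.IsSolvable.commutator_lt_top_of_nontrivial (Q ⧸ K)
  have hsur := QuotientGroup.mk'_surjective K
  have h3 := congrArg (Subgroup.map (QuotientGroup.mk' K)) h1
  rw [Subgroup.map_sup, Subgroup.map_top_of_surjective _ hsur, commutator_def, map_commutator,
    Subgroup.map_top_of_surjective _ hsur, show Subgroup.map (QuotientGroup.mk' K) K = ⊥ by simp,
    bot_sup_eq] at h3
  exact h2.ne h3

lemma final_aux {G : Type*} [Group G] [Finite G] (h : IsMinimalNonsupersoluble G) :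
    ∃ P : Subgroup G, P.Normal ∧ (frattiniIn P).Normal ∧ frattiniIn P ≤ P ∧ ssResidual G = P ∧
      (∀ M : Subgroup G, M.Normal → M ≤ P → M = P ∨ M ≤ frattiniIn P) ∧
      (∀ a, P ≠ frattiniIn P ⊔ zpowers a) := by
  obtain ⟨p, hp, P, hPn, hP, hP0, hpi⟩ := partI h
  have : Fact p.Prime := ⟨hp⟩
  obtain ⟨hch, hM⟩ := partII h hPn hP hP0 hpi
  have hFn : (frattiniIn P).Normal := ConjAct.normal_of_characteristic_of_normal
  have hFP : frattiniIn P ≤ P := map_subtype_le _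
  have hcF : ⁅P, P⁆ ≤ frattiniIn P := by
    rw [← map_subtype_commutator]
    exact map_mono (comm_le_frattini hP)
  have hdich : ∀ M : Subgroup G, M.Normal → M ≤ P → M = P ∨ M ≤ frattiniIn P := by
    intro M hMn hMP
    by_cases hMe : M = P
    · exact Or.inl hMe
    · exact Or.inr ((hM M hMn hMP hMe).trans hcF)
  have hkey : ∀ a, P ≠ frattiniIn P ⊔ zpowers a := by
    intro a ha
    have haP : a ∈ P := by rw [ha]; exact mem_sup_right (mem_zpowers a)
    have htop : zpowers (⟨a, haP⟩ : P) ⊔ frattini P = ⊤ := by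
      rw [eq_top_iff]
      rintro ⟨x, hx⟩ -
      have hx' := hx
      rw [ha, mem_sup_of_normal_left] at hx'
      obtain ⟨_, ⟨f, hf, rfl⟩, _, ⟨k, rfl⟩, hfx⟩ := hx'
      have : (⟨x, hx⟩ : P) = f * (⟨a, haP⟩ : P) ^ k := Subtype.ext hfx.symm
      rw [this]
      exact mul_mem (mem_sup_right hf) (mem_sup_left (zpow_mem (mem_zpowers _) k))
    have hz := frattini_nongenerating htop
    have hPz : P = zpowers a := by
      refine le_antisymm (fun x hx => ?_) (by rwa [zpowers_le])
      have : (⟨x, hx⟩ : P) ∈ zpowers (⟨a, haP⟩ : P) := hz ▸ mem_top _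
      obtain ⟨k, hk⟩ := this
      exact ⟨k, congrArg Subtype.val hk⟩
    refine h.1 (isSupersoluble_of_sChain (Relation.ReflTransGen.head ?_ hch))
    exact ⟨inferInstance, hPn, a, by rw [bot_sup_eq]; exact hPz⟩
  refine ⟨P, hPn, hFn, hFP, ?_, hdich, hkey⟩
  unfold ssResidual
  apply le_antisymm
  · exact iInf₂_le P ⟨hPn, quot_of_sChain hch⟩
  · rw [le_iInf₂_iff]
    rintro N ⟨hNn, hN⟩
    rcases hdich (N ⊓ P) inferInstance inf_le_right with h1 | h1
    · rw [← h1]; exact inf_le_left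
    · exfalso
      obtain ⟨a, ha⟩ := chief_cyclic (sChain_of_quot hN) hPn hFn hFP
        (fun he => hkey 1 (by rw [zpowers_one_eq_bot, sup_bot_eq]; exact he.symm)) h1
        (fun M hMn h2 h3 => by
          rcases hdich M hMn h3 with h4 | h4
          · exact Or.inr h4
          · exact Or.inl (le_antisymm h4 h2))
      exact hkey a ha

/-- In a minimal nonsupersoluble group `G`, the factor `G^𝔘/Φ(G^𝔘)` is a noncyclic chief
factor of `G`. -/
theorem minimalNonsupersoluble_ssResidual_frattini_chief
    (G : Type*) [Group G] [Finite G] (h : IsMinimalNonsupersoluble G) :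
    IsChiefFactor (ssResidual G) (frattiniIn (ssResidual G)) ∧
      ∃ hB : (frattiniIn (ssResidual G)).Normal,
        haveI := hB
        ¬ IsCyclic
          ↥((ssResidual G).map (QuotientGroup.mk' (frattiniIn (ssResidual G)))) := by

  obtain ⟨P, hPn, hFn, hFP, hres, hdich, hkey⟩ := final_aux h
  rw [hres]
  have hsur := QuotientGroup.mk'_surjective (frattiniIn P)
  refine ⟨⟨hPn, hFP, hFn, hPn.map _ hsur, ?_, ?_⟩, hFn, ?_⟩
  · intro h0
    rw [(Subgroup.map_eq_bot_iff _), QuotientGroup.ker_mk'] at h0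
    exact hkey 1 (by rw [zpowers_one_eq_bot, sup_bot_eq]; exact le_antisymm h0 hFP)
  · intro M hMn hMP hM0
    have h1 : M.comap (QuotientGroup.mk' (frattiniIn P)) ≤ P := by
      have := comap_mono (f := QuotientGroup.mk' (frattiniIn P)) hMP
      rwa [comap_map_eq_self (by rwa [QuotientGroup.ker_mk'])] at this
    have h2 : (M.comap (QuotientGroup.mk' (frattiniIn P))).map (QuotientGroup.mk' (frattiniIn P)) = M :=
      map_comap_eq_self_of_surjective hsur M
    rcases hdich _ (hMn.comap _) h1 with h3 | h3
    · exact h2.symm.trans (congrArg _ h3)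
    · exfalso
      apply hM0
      rw [← h2, Subgroup.map_eq_bot_iff, QuotientGroup.ker_mk']
      exact h3
  · rintro ⟨⟨_, a, ha, rfl⟩, hg⟩
    refine hkey a (le_antisymm (fun x hx => ?_) (sup_le hFP (by rwa [zpowers_le])))
    obtain ⟨k, hk⟩ := hg ⟨_, x, hx, rfl⟩
    have hk' : ((a ^ k : G) : G ⧸ frattiniIn P) = (x : G ⧸ frattiniIn P) := congrArg Subtype.val hk
    rw [QuotientGroup.eq] at hk'
    have h3 : x = a ^ k * ((a ^ k)⁻¹ * x) := by group
    rw [h3]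
    exact mul_mem (mem_sup_right (zpow_mem (mem_zpowers _) k)) (mem_sup_left hk')
end
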